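/- Let K be a compact Hausdorff space belonging to the class G₀ (defined below). The following conditions are equivalent: (i) K is a Corson compact with property (M); (ii) every closed linear subspace of C(K) has a 1-projectional skeleton; (iii) for every closed linear subspace Y of C(K), the dual unit ball (B_{Y*}, w*) has a retractional skeleton. -/

import Mathlib

/-!
The implications (ii) ⇒ (iii) ⇒ (i) ⇒ (ii) are proved.

*(ii) ⇒ (iii).* Adjoints of the projections of a 1-projectional skeleton act on the dual ball as
weak*-continuous retractions with metrizable ranges (`adjBall`,
`Has1ProjectionalSkeleton.hasRetractionalSkeleton`).

*(iii) ⇒ (i).* The set induced by a retractional skeleton (the union of the ranges) is dense,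
countably closed and countably tight. In the dual ball of a function space `Y` it contains every
evaluation at a point where some member of `Y` peaks (`comb_mem_of_peak`), and further evaluations
when `Y` glues two points (`ev_mem_of_pair`). Well-chosen subspaces `Y` then give:

* `K` and its continuous images contain no copy of `[0, ω₁]` (`HeredSkeleton.false_of_omega1`), so
  membership in `G₀` makes the `Gδ` points dense (`dense_gdeltaPts`);
* with `Y = {f | f x = f b}`, each point is in the closure of countably many `Gδ` points
  (`exists_countable_gdelta`), so all evaluations on `C(K)` lie in the induced set, `K` has a
  skeleton consisting of retractions whose ranges cover it, and such spaces are Corson compact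
  (`RetractionalSkeleton.isCorsonCompact_of_full`, by induction on cardinality);
* with `Y = {f | ∫ f dμ = f x₀}`, the support of `μ` is separable (`isSeparable_of_hered`).

*(i) ⇒ (ii).* For `K` embedded in a Σ-product, cofinally many countable coordinate sets `C` are
good: erasing the coordinates outside `C` is a retraction `ρ_C` of `K`. By property (M) and the
Riesz representation, each functional on `C(K)` is invariant under `f ↦ f ∘ ρ_C` for all large
good `C` (`exists_countable_functional`). A closing-off argument with functionals annihilating `Y`
shows that cofinally many of these projections leave a closed subspace `Y` invariant
(`exists_admissibleSet`); their restrictions to `Y` form a 1-projectional skeleton.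
-/

open Filter Topology TopologicalSpace Set

universe u v

/-- A retractional skeleton in a topological space `K`: a family `r s : C(K, K)` of continuous
retractions indexed by an up-directed (nonempty) partially ordered set `Γ` such that
(i) each `r s` has metrizable range and the net `(r s x)` converges to `x`;
(ii) `s ≤ t` implies `r s ∘ r t = r t ∘ r s = r s`;
(iii) each strictly increasing sequence has a supremum `t` and `r t x = lim_n r (f n) x`. -/
structure RetractionalSkeleton (K : Type u) [TopologicalSpace K] : Type (u + 1) where
  Γ : Type u
  [po : PartialOrder Γ]
  [ne : Nonempty Γ]
  directed : ∀ s t : Γ, ∃ w, s ≤ w ∧ t ≤ w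
  r : Γ → C(K, K)
  isRetraction : ∀ s, ∀ x : K, r s (r s x) = r s x
  metrizable : ∀ s, MetrizableSpace ↥(Set.range (r s))
  tendsto_id : ∀ x : K, Tendsto (fun s => r s x) atTop (𝓝 x)
  comp_eq_of_le : ∀ s t : Γ, s ≤ t → ∀ x : K, r s (r t x) = r s x ∧ r t (r s x) = r s x
  sup_seq : ∀ f : ℕ → Γ, StrictMono f → ∃ t : Γ, IsLUB (Set.range f) t ∧
    ∀ x : K, Tendsto (fun n => r (f n) x) atTop (𝓝 (r t x))

/-- The set `D(𝔰) = ⋃ s, r s [K]` induced by a retractional skeleton. -/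
def RetractionalSkeleton.inducedSet {K : Type u} [TopologicalSpace K]
    (𝔰 : RetractionalSkeleton K) : Set K := ⋃ s, Set.range (𝔰.r s)

/-- `D` is induced by an r-skeleton in `K`. -/
def IsInducedByRSkeleton {K : Type u} [TopologicalSpace K] (D : Set K) : Prop :=
  ∃ 𝔰 : RetractionalSkeleton K, 𝔰.inducedSet = D

/-- `K` has a retractional skeleton. -/
def HasRetractionalSkeleton (K : Type u) [TopologicalSpace K] : Prop :=
  Nonempty (RetractionalSkeleton K)

/-- `K` is a Corson compact space: it is homeomorphic to a compact subset of
`Σ(Γ) = {x ∈ ℝ^Γ : x γ ≠ 0 for at most countably many γ}` for some set `Γ`. -/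
def IsCorsonCompact (K : Type u) [TopologicalSpace K] : Prop :=
  ∃ (Γ : Type u) (A : Set (Γ → ℝ)), IsCompact A ∧
    (∀ x ∈ A, {γ | x γ ≠ 0}.Countable) ∧ Nonempty (K ≃ₜ ↥A)

/-- A projectional skeleton in a normed space `X`: a family of bounded linear projections
indexed by an up-directed (nonempty) partially ordered set `Γ` such that
(i) `X = ⋃ s, P s [X]` and each `P s [X]` is separable;
(ii) `s ≤ t` implies `P s ∘ P t = P t ∘ P s = P s`;
(iii) each strictly increasing sequence has a supremum `t` with
`P t [X] = closure (⋃ n, P (f n) [X])`. -/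
structure ProjectionalSkeleton (X : Type u) [NormedAddCommGroup X] [NormedSpace ℝ X] :
    Type (u + 1) where
  Γ : Type u
  [po : PartialOrder Γ]
  [ne : Nonempty Γ]
  directed : ∀ s t : Γ, ∃ w, s ≤ w ∧ t ≤ w
  P : Γ → X →L[ℝ] X
  idem : ∀ s, ∀ x : X, P s (P s x) = P s x
  separable : ∀ s, IsSeparable (Set.range (P s))
  covers : ∀ x : X, ∃ s, x ∈ Set.range (P s)
  comp_eq_of_le : ∀ s t : Γ, s ≤ t → ∀ x : X, P s (P t x) = P s x ∧ P t (P s x) = P s x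
  sup_seq : ∀ f : ℕ → Γ, StrictMono f → ∃ t : Γ, IsLUB (Set.range f) t ∧
    (Set.range (P t) : Set X) = closure (⋃ n, Set.range (P (f n)))

/-- `X` has a 1-projectional skeleton: a projectional skeleton with `‖P s‖ ≤ 1` for all `s`. -/
def Has1ProjectionalSkeleton (X : Type u) [NormedAddCommGroup X] [NormedSpace ℝ X] : Prop :=
  ∃ 𝔰 : ProjectionalSkeleton X, ∀ s, ‖𝔰.P s‖ ≤ 1

/-- The closed unit ball of the dual of `X`, as a subset of the weak* dual `(X*, w*)`. -/
def dualBall (X : Type u) [NormedAddCommGroup X] [NormedSpace ℝ X] : Set (WeakDual ℝ X) :=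
  {φ | ∀ x : X, |φ x| ≤ ‖x‖}

/-- The first uncountable ordinal `ω₁`. -/
noncomputable def omega1 : Ordinal.{0} := (Cardinal.aleph 1).ord

/-- The ordinal segment `[0, ω₁]` with its (order-induced) topology. -/
abbrev OrdinalSegmentOmega1 : Type 1 := ↥(Set.Iic omega1)

/-- `K` belongs to the class `G₀`: for every nonempty open `U ⊆ K`, if `U` contains no
Gδ point of `K`, then the one-point compactification of `U` contains a homeomorphic copy
of the ordinal segment `[0, ω₁]`. -/
def InClassG0 (K : Type u) [TopologicalSpace K] : Prop :=
  ∀ U : Set K, IsOpen U → U.Nonempty → (∀ x ∈ U, ¬ IsGδ ({x} : Set K)) →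
    ∃ f : OrdinalSegmentOmega1 → OnePoint ↥U, Topology.IsEmbedding f

/-- `K` has property (M): every Radon (regular Borel) probability measure on `K` has
separable support (the support being the set of points all of whose neighborhoods have
positive measure). -/
def HasPropertyM (K : Type u) [TopologicalSpace K] [MeasurableSpace K] : Prop :=
  ∀ μ : MeasureTheory.Measure K, MeasureTheory.IsProbabilityMeasure μ → μ.Regular →
    IsSeparable {x : K | ∀ U ∈ 𝓝 x, 0 < μ U}

set_option linter.unusedSectionVars false
set_option linter.style.haveILetI false

/-! ### Retractional skeletons: sequences, tightness and restriction -/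

section Skeleton

attribute [instance] RetractionalSkeleton.po RetractionalSkeleton.ne

namespace RetractionalSkeleton

variable {X : Type u} [TopologicalSpace X] [CompactSpace X] [T2Space X]
  (𝔰 : RetractionalSkeleton X)

lemma mem_range_iff (s : 𝔰.Γ) (x : X) : x ∈ range (𝔰.r s) ↔ 𝔰.r s x = x := by
  constructor
  · rintro ⟨y, rfl⟩; exact 𝔰.isRetraction s y
  · intro h; exact ⟨x, h⟩

lemma range_mono {s t : 𝔰.Γ} (h : s ≤ t) : range (𝔰.r s) ⊆ range (𝔰.r t) := by
  rintro _ ⟨y, rfl⟩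
  exact ⟨𝔰.r s y, (𝔰.comp_eq_of_le s t h y).2⟩

lemma r_comp_of_le {s t : 𝔰.Γ} (h : s ≤ t) (x : X) : 𝔰.r s (𝔰.r t x) = 𝔰.r s x :=
  (𝔰.comp_eq_of_le s t h x).1

lemma comp_r_of_le {s t : 𝔰.Γ} (h : s ≤ t) (x : X) : 𝔰.r t (𝔰.r s x) = 𝔰.r s x :=
  (𝔰.comp_eq_of_le s t h x).2

lemma r_eq_of_r_eq {s t : 𝔰.Γ} (h : s ≤ t) {x y : X} (hxy : 𝔰.r t x = 𝔰.r t y) :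
    𝔰.r s x = 𝔰.r s y := by
  rw [← 𝔰.r_comp_of_le h x, hxy, 𝔰.r_comp_of_le h y]

lemma isCompact_range (s : 𝔰.Γ) : IsCompact (range (𝔰.r s)) :=
  _root_.isCompact_range (𝔰.r s).continuous

lemma isClosed_range (s : 𝔰.Γ) : IsClosed (range (𝔰.r s)) := (𝔰.isCompact_range s).isClosed

lemma mem_inducedSet {x : X} : x ∈ 𝔰.inducedSet ↔ ∃ s, 𝔰.r s x = x := by
  simp only [inducedSet, mem_iUnion, mem_range_iff]

lemma r_mem_inducedSet (s : 𝔰.Γ) (x : X) : 𝔰.r s x ∈ 𝔰.inducedSet :=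
  𝔰.mem_inducedSet.2 ⟨s, 𝔰.isRetraction s x⟩

lemma dense_inducedSet : Dense 𝔰.inducedSet := by
  intro x
  haveI : IsDirectedOrder 𝔰.Γ := ⟨fun a b => 𝔰.directed a b⟩
  exact mem_closure_of_tendsto (𝔰.tendsto_id x) (Eventually.of_forall fun s =>
    𝔰.r_mem_inducedSet s x)

/-- Suprema also exist along merely monotone sequences: such a sequence is eventually constant
or has a strictly increasing subsequence. -/
lemma exists_sup (f : ℕ → 𝔰.Γ) (hf : Monotone f) : ∃ t : 𝔰.Γ, IsLUB (range f) t ∧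
    ∃ k : ℕ → ℕ, ∀ x, Tendsto (fun n => 𝔰.r (f (k n)) x) atTop (𝓝 (𝔰.r t x)) := by
  by_cases h : ∃ N, ∀ n ≥ N, f n = f N
  · obtain ⟨N, hN⟩ := h
    refine ⟨f N, ⟨?_, fun b hb => hb ⟨N, rfl⟩⟩, fun _ => N, fun x => tendsto_const_nhds⟩
    rintro _ ⟨n, rfl⟩
    rcases le_total n N with h | h
    · exact hf h
    · exact (hN n h).le
  · push Not at h
    have h' : ∀ N, ∃ n, N ≤ n ∧ f N < f n := fun N => by
      obtain ⟨n, hn, hne⟩ := h N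
      exact ⟨n, hn, lt_of_le_of_ne (hf hn) (Ne.symm hne)⟩
    choose g hg1 hg2 using h'
    let k : ℕ → ℕ := fun n => g^[n] 0
    have hk : StrictMono (fun n => f (k n)) := strictMono_nat_of_lt_succ fun n => by
      show f (g^[n] 0) < f (g^[n+1] 0)
      rw [Function.iterate_succ_apply']
      exact hg2 _
    obtain ⟨t, ht, htx⟩ := 𝔰.sup_seq _ hk
    have hkn : ∀ n, n ≤ k n := by
      have : StrictMono k := strictMono_nat_of_lt_succ fun n => by
        by_contra hcon
        push Not at hcon
        exact absurd (hk (Nat.lt_succ_self n)) (not_lt_of_ge (hf hcon))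
      exact this.id_le
    refine ⟨t, ⟨?_, fun b hb => ht.2 ?_⟩, k, htx⟩
    · rintro _ ⟨n, rfl⟩
      exact (hf (hkn n)).trans (ht.1 ⟨n, rfl⟩)
    · rintro _ ⟨n, rfl⟩
      exact hb ⟨k n, rfl⟩

lemma eq_of_forall_eq {f : ℕ → 𝔰.Γ} {t : 𝔰.Γ} {k : ℕ → ℕ}
    (hk : ∀ x, Tendsto (fun n => 𝔰.r (f (k n)) x) atTop (𝓝 (𝔰.r t x))) {x y : X}
    (h : ∀ n, 𝔰.r (f n) x = 𝔰.r (f n) y) : 𝔰.r t x = 𝔰.r t y := by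
  refine tendsto_nhds_unique (hk x) ?_
  simp only [h]
  exact hk y

/-- A countable subset of the induced set lies in the range of a single retraction. -/
lemma exists_ge_of_countable {E : Set X} (hE : E.Countable) (hED : E ⊆ 𝔰.inducedSet)
    (s₀ : 𝔰.Γ) : ∃ s, s₀ ≤ s ∧ E ⊆ range (𝔰.r s) := by
  rcases E.eq_empty_or_nonempty with rfl | hne
  · exact ⟨s₀, le_rfl, empty_subset _⟩
  obtain ⟨e, rfl⟩ := hE.exists_eq_range hne
  have : ∀ n, ∃ s, 𝔰.r s (e n) = e n := fun n => 𝔰.mem_inducedSet.1 (hED ⟨n, rfl⟩)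
  choose σ hσ using this
  choose j hj1 hj2 using 𝔰.directed
  let f : ℕ → 𝔰.Γ := fun n => Nat.rec s₀ (fun m a => j a (σ m)) n
  have hf : Monotone f := monotone_nat_of_le_succ fun n => hj1 _ _
  obtain ⟨t, ht, -⟩ := 𝔰.exists_sup f hf
  refine ⟨t, ht.1 ⟨0, rfl⟩, ?_⟩
  rintro _ ⟨n, rfl⟩
  have : σ n ≤ t := (hj2 (f n) (σ n)).trans (ht.1 ⟨n + 1, rfl⟩)
  exact 𝔰.range_mono this ((𝔰.mem_range_iff _ _).2 (hσ n))

/-- The topology of `range (r t)` is generated by the retractions along a sequence with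
supremum `t`. -/
lemma exists_separating {f : ℕ → 𝔰.Γ} (hf : Monotone f) {t : 𝔰.Γ} {k : ℕ → ℕ}
    (hk : ∀ x, Tendsto (fun n => 𝔰.r (f (k n)) x) atTop (𝓝 (𝔰.r t x)))
    (x : X) {U : Set X} (hU : IsOpen U) (hxU : 𝔰.r t x ∈ U) :
    ∃ n, 𝔰.r (f n) x ∉ 𝔰.r (f n) '' (range (𝔰.r t) \ U) := by
  by_contra! hcon
  let B : ℕ → Set X := fun n => (range (𝔰.r t) \ U) ∩ {z | 𝔰.r (f n) z = 𝔰.r (f n) x}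
  have hcl : ∀ n, IsClosed (B n) := fun n =>
    ((𝔰.isClosed_range t).sdiff hU).inter
      (isClosed_eq (𝔰.r (f n)).continuous continuous_const)
  have hne : (⋂ n, B n).Nonempty := by
    refine IsCompact.nonempty_iInter_of_sequence_nonempty_isCompact_isClosed B ?_ ?_
      ((hcl 0).isCompact) hcl
    · intro n z hz
      exact ⟨hz.1, 𝔰.r_eq_of_r_eq (hf (Nat.le_succ n)) hz.2⟩
    · intro n
      obtain ⟨z, hz, hzx⟩ := hcon n
      exact ⟨z, hz, hzx⟩
  obtain ⟨z, hz⟩ := hne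
  rw [mem_iInter] at hz
  have h1 : 𝔰.r t z = 𝔰.r t x := 𝔰.eq_of_forall_eq hk fun n => (hz n).2
  have h2 : 𝔰.r t z = z := (𝔰.mem_range_iff _ _).1 (hz 0).1.1
  exact (hz 0).1.2 (by rw [← h2, h1]; exact hxU)

/-- The closing-off argument: given countable subsets `c i s` of the induced set, there is `t` above
`s₀` such that approximability of all `r s x` by `r s '' c i s` implies that `r t x` lies in the
closure of countably many of the sets `c i s`. -/
lemma closing_off {ι : Type*} [Countable ι] (c : ι → 𝔰.Γ → Set X)
    (hc : ∀ i s, (c i s).Countable) (hcD : ∀ i s, c i s ⊆ 𝔰.inducedSet) (s₀ : 𝔰.Γ) :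
    ∃ (t : 𝔰.Γ) (σ : ℕ → 𝔰.Γ), s₀ ≤ t ∧ ∀ i x,
      (∀ s, 𝔰.r s x ∈ closure (𝔰.r s '' c i s)) → 𝔰.r t x ∈ closure (⋃ n, c i (σ n)) := by
  have h := fun s : 𝔰.Γ => 𝔰.exists_ge_of_countable (E := ⋃ i, c i s)
    (countable_iUnion fun i => hc i s) (iUnion_subset fun i => hcD i s) s
  choose g hg1 hg2 using h
  let f : ℕ → 𝔰.Γ := fun n => Nat.rec s₀ (fun _ a => g a) n
  have hf : Monotone f := monotone_nat_of_le_succ fun n => hg1 _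
  obtain ⟨t, ht, k, hk⟩ := 𝔰.exists_sup f hf
  refine ⟨t, f, ht.1 ⟨0, rfl⟩, fun i x hx => ?_⟩
  rw [mem_closure_iff]
  intro U hU hxU
  obtain ⟨n, hn⟩ := 𝔰.exists_separating hf hk x hU hxU
  have hcpt : IsClosed (𝔰.r (f n) '' (range (𝔰.r t) \ U)) :=
    ((((𝔰.isClosed_range t).sdiff hU).isCompact).image (𝔰.r (f n)).continuous).isClosed
  obtain ⟨_, hz1, z, hz, rfl⟩ := mem_closure_iff.1 (hx (f n)) _ hcpt.isOpen_compl hn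
  refine ⟨z, ?_, mem_iUnion.2 ⟨n, hz⟩⟩
  by_contra hzU
  refine hz1 ⟨z, ⟨?_, hzU⟩, rfl⟩
  exact 𝔰.range_mono (ht.1 ⟨n + 1, rfl⟩) (hg2 (f n) (mem_iUnion.2 ⟨i, hz⟩))

lemma exists_countable_approx (s : 𝔰.Γ) {A : Set X} {x : X} (hx : x ∈ closure A) :
    ∃ C ⊆ A, C.Countable ∧ 𝔰.r s x ∈ closure (𝔰.r s '' C) := by
  haveI := 𝔰.metrizable s
  let ρ : X → range (𝔰.r s) := rangeFactorization (𝔰.r s)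
  have hρ : Continuous ρ := (𝔰.r s).continuous.rangeFactorization
  have h1 : ρ x ∈ closure (ρ '' A) := image_closure_subset_closure_image hρ ⟨x, hx, rfl⟩
  obtain ⟨y, hy, hyl⟩ := mem_closure_iff_seq_limit.1 h1
  choose a ha hay using hy
  refine ⟨range a, range_subset_iff.2 ha, countable_range a, ?_⟩
  have h2 : Tendsto (fun n => ((y n : range (𝔰.r s)) : X)) atTop (𝓝 (𝔰.r s x)) :=
    (continuous_subtype_val.tendsto _).comp hyl
  refine mem_closure_of_tendsto h2 (Eventually.of_forall fun n => ⟨a n, ⟨n, rfl⟩, ?_⟩)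
  rw [← hay n]; rfl

/-- The induced set is countably tight. -/
lemma tight {A : Set X} (hA : A ⊆ 𝔰.inducedSet) {x : X} (hx : x ∈ 𝔰.inducedSet)
    (hxA : x ∈ closure A) : ∃ C ⊆ A, C.Countable ∧ x ∈ closure C := by
  choose c hcA hcc hcx using fun s => 𝔰.exists_countable_approx s hxA
  obtain ⟨s₀, hs₀⟩ := 𝔰.mem_inducedSet.1 hx
  obtain ⟨t, σ, hst, h⟩ := 𝔰.closing_off (fun _ : Unit => c) (fun _ => hcc)
    (fun _ s => (hcA s).trans hA) s₀
  refine ⟨⋃ n, c (σ n), iUnion_subset fun n => hcA _, countable_iUnion fun n => hcc _, ?_⟩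
  have := h () x hcx
  rwa [(𝔰.mem_range_iff t x).1 (𝔰.range_mono hst ((𝔰.mem_range_iff _ _).2 hs₀))] at this

/-- The induced set is countably closed. -/
lemma closure_countable {C : Set X} (hC : C.Countable) (hCD : C ⊆ 𝔰.inducedSet) :
    closure C ⊆ 𝔰.inducedSet := by
  obtain ⟨s, -, hs⟩ := 𝔰.exists_ge_of_countable hC hCD (Classical.arbitrary _)
  refine (closure_minimal hs (𝔰.isClosed_range s)).trans ?_
  exact subset_iUnion (fun s => range (𝔰.r s)) s

/-- If `x` is the only point in the closures of countably many open sets, it lies in the induced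
set. This covers `Gδ` points, but here the closures need not be neighbourhoods of `x`. -/
lemma mem_of_iInter_closure {ι : Type*} [Countable ι] {V : ι → Set X}
    (hV : ∀ n, IsOpen (V n)) {x : X}
    (hx : ∀ n, x ∈ closure (V n)) (h : ∀ y, (∀ n, y ∈ closure (V n)) → y = x) :
    x ∈ 𝔰.inducedSet := by
  have hx' : ∀ n, x ∈ closure (V n ∩ 𝔰.inducedSet) := fun n => by
    have := 𝔰.dense_inducedSet.open_subset_closure_inter (hV n)
    exact closure_minimal this isClosed_closure (hx n)
  choose c hcA hcc hcx using fun n s => 𝔰.exists_countable_approx s (hx' n)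
  obtain ⟨t, σ, -, ht⟩ := 𝔰.closing_off c hcc
    (fun n s => (hcA n s).trans inter_subset_right) (Classical.arbitrary _)
  refine 𝔰.mem_inducedSet.2 ⟨t, h _ fun n => ?_⟩
  exact closure_mono (iUnion_subset fun m => (hcA n _).trans inter_subset_left) (ht n x (hcx n))

/-- A closed subset of the induced set has a skeleton whose induced set is everything. -/
lemma exists_restrict {F : Set X} (hF : IsClosed F) (hFD : F ⊆ 𝔰.inducedSet) :
    ∃ 𝔱 : RetractionalSkeleton F, 𝔱.inducedSet = univ := by
  have hdense : ∀ s, ∃ C ⊆ F, C.Countable ∧ ∀ x ∈ F, 𝔰.r s x ∈ closure (𝔰.r s '' C) := by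
    intro s
    haveI := 𝔰.metrizable s
    haveI : CompactSpace (range (𝔰.r s)) := isCompact_iff_compactSpace.1 (𝔰.isCompact_range s)
    letI := metrizableSpaceMetric (range (𝔰.r s))
    haveI : SecondCountableTopology (range (𝔰.r s)) := inferInstance
    let ρ : X → range (𝔰.r s) := rangeFactorization (𝔰.r s)
    obtain ⟨B, hBF, hB, hBd⟩ := (IsSeparable.of_separableSpace (ρ '' F)).exists_countable_dense_subset
    have hB' : ∀ b : B, ∃ a ∈ F, ρ a = b := fun b => hBF b.2
    choose a haF ha using hB'
    haveI := hB.to_subtype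
    refine ⟨range a, range_subset_iff.2 haF, countable_range a, fun x hx => ?_⟩
    have h1 : ρ x ∈ closure B := hBd ⟨x, hx, rfl⟩
    have h2 : (ρ x : X) ∈ closure (Subtype.val '' B) :=
      image_closure_subset_closure_image continuous_subtype_val ⟨_, h1, rfl⟩
    refine closure_mono ?_ h2
    rintro _ ⟨b, hb, rfl⟩
    exact ⟨a ⟨b, hb⟩, ⟨_, rfl⟩, congrArg Subtype.val (ha ⟨b, hb⟩)⟩
  choose c hcF hcc hcx using hdense
  have cofinal : ∀ s, ∃ t, s ≤ t ∧ ∀ x ∈ F, 𝔰.r t x ∈ F := by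
    intro s
    obtain ⟨t, σ, hst, h⟩ := 𝔰.closing_off (fun _ : Unit => c) (fun _ => hcc)
      (fun _ s => (hcF s).trans hFD) s
    refine ⟨t, hst, fun x hx => ?_⟩
    exact closure_minimal (iUnion_subset fun n => hcF _) hF (h () x fun s => hcx s x hx)
  let Γ' := {t : 𝔰.Γ // ∀ x ∈ F, 𝔰.r t x ∈ F}
  haveI : IsDirectedOrder 𝔰.Γ := ⟨fun a b => 𝔰.directed a b⟩
  have hdir : ∀ s t : Γ', ∃ w, s ≤ w ∧ t ≤ w := fun s t => by
    obtain ⟨w, h1, h2⟩ := 𝔰.directed s.1 t.1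
    obtain ⟨w', h3, h4⟩ := cofinal w
    exact ⟨⟨w', h4⟩, h1.trans h3, h2.trans h3⟩
  haveI : IsDirectedOrder Γ' := ⟨hdir⟩
  haveI : Nonempty Γ' := by
    obtain ⟨w', h3, h4⟩ := cofinal (Classical.arbitrary _)
    exact ⟨⟨w', h4⟩⟩
  have hval : Tendsto (Subtype.val : Γ' → 𝔰.Γ) atTop atTop := by
    refine tendsto_atTop.2 fun s => ?_
    obtain ⟨t, ht, ht'⟩ := cofinal s
    filter_upwards [eventually_ge_atTop (⟨t, ht'⟩ : Γ')] with w hw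
    exact ht.trans hw
  refine ⟨{ Γ := Γ'
            po := inferInstance
            ne := inferInstance
            directed := hdir
            r := fun s => ⟨fun x => ⟨𝔰.r s.1 x, s.2 x x.2⟩, by fun_prop⟩
            isRetraction := fun s x => Subtype.ext (𝔰.isRetraction s.1 x)
            metrizable := ?_
            tendsto_id := ?_
            comp_eq_of_le := fun s t h x =>
              ⟨Subtype.ext (𝔰.comp_eq_of_le s.1 t.1 h x).1,
                Subtype.ext (𝔰.comp_eq_of_le s.1 t.1 h x).2⟩
            sup_seq := ?_ }, ?_⟩
  · intro s
    haveI := 𝔰.metrizable s.1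
    let j : range (fun x : F => (⟨𝔰.r s.1 x, s.2 x x.2⟩ : F)) → range (𝔰.r s.1) :=
      fun y => ⟨y.1.1, by obtain ⟨_, x, rfl⟩ := y; exact ⟨_, rfl⟩⟩
    have hj : Topology.IsEmbedding j := by
      have h1 : Topology.IsEmbedding (Subtype.val ∘ j) :=
        (Topology.IsEmbedding.subtypeVal (p := (· ∈ F))).comp Topology.IsEmbedding.subtypeVal
      exact Topology.IsEmbedding.of_comp (by fun_prop) continuous_subtype_val h1
    exact hj.metrizableSpace
  · intro x
    rw [tendsto_subtype_rng]
    exact (𝔰.tendsto_id x.1).comp hval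
  · intro f hf
    obtain ⟨t, ht, htx⟩ := 𝔰.sup_seq (fun n => (f n).1) (fun a b h => hf h)
    refine ⟨⟨t, fun x hx => ?_⟩, ⟨?_, ?_⟩, ?_⟩
    · exact hF.mem_of_tendsto (htx x) (Eventually.of_forall fun n => (f n).2 x hx)
    · rintro _ ⟨n, rfl⟩
      exact ht.1 ⟨n, rfl⟩
    · intro b hb
      refine ht.2 ?_
      rintro _ ⟨n, rfl⟩
      exact hb ⟨n, rfl⟩
    · intro x
      rw [tendsto_subtype_rng]
      exact htx x
  · refine eq_univ_of_forall fun x => ?_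
    obtain ⟨s, hs⟩ := 𝔰.mem_inducedSet.1 (hFD x.2)
    obtain ⟨t, hst, ht⟩ := cofinal s
    refine mem_iUnion.2 ⟨⟨t, ht⟩, x, Subtype.ext ?_⟩
    exact (𝔰.mem_range_iff _ _).1 (𝔰.range_mono hst ((𝔰.mem_range_iff _ _).2 hs))

end RetractionalSkeleton

end Skeleton

/-! ### Spaces with a full retractional skeleton are Corson compact -/

namespace RetractionalSkeleton

variable {X : Type u} [TopologicalSpace X] [CompactSpace X] [T2Space X]
  (𝔰 : RetractionalSkeleton X)

/-- There is a monotone choice of upper bounds of finite sets of indices. -/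
lemma exists_finset_upper :
    ∃ w : Finset 𝔰.Γ → 𝔰.Γ, Monotone w ∧ ∀ F, ∀ a ∈ F, a ≤ w F := by
  classical
  haveI : IsDirectedOrder 𝔰.Γ := ⟨fun a b => 𝔰.directed a b⟩
  have hub := fun s : Finset 𝔰.Γ => s.exists_le
  choose M hM using hub
  let H : ∀ F : Finset 𝔰.Γ, (∀ G ⊂ F, 𝔰.Γ) → 𝔰.Γ := fun F rec =>
    M (F.ssubsets.attach.image (fun G => rec G.1 (Finset.mem_ssubsets.1 G.2)) ∪ F)
  let w : Finset 𝔰.Γ → 𝔰.Γ := Finset.strongInduction H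
  have hw : ∀ F, w F = H F (fun G _ => w G) := Finset.strongInduction_eq H
  refine ⟨w, ?_, ?_⟩
  · intro G F hGF
    rcases eq_or_ne G F with rfl | hne
    · exact le_rfl
    · rw [hw F]
      refine hM _ _ (Finset.mem_union_left _ (Finset.mem_image.2 ?_))
      exact ⟨⟨G, Finset.mem_ssubsets.2 (lt_of_le_of_ne hGF hne)⟩, Finset.mem_attach _ _, rfl⟩
  · intro F a ha
    rw [hw F]
    exact hM _ _ (Finset.mem_union_right _ ha)

variable (w : Finset 𝔰.Γ → 𝔰.Γ)

/-- The closure of the union of the ranges of the retractions `r (w F)`, `F ⊆ S` finite. -/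
def hull (S : Set 𝔰.Γ) : Set X :=
  closure (⋃ F : {F : Finset 𝔰.Γ // (F : Set 𝔰.Γ) ⊆ S}, range (𝔰.r (w F.1)))

lemma isClosed_hull (S : Set 𝔰.Γ) : IsClosed (𝔰.hull w S) := isClosed_closure

lemma hull_mono {S T : Set 𝔰.Γ} (h : S ⊆ T) : 𝔰.hull w S ⊆ 𝔰.hull w T := by
  refine closure_mono (iUnion_subset fun F => ?_)
  exact subset_iUnion (fun F : {F : Finset 𝔰.Γ // (F : Set 𝔰.Γ) ⊆ T} => range (𝔰.r (w F.1)))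
    ⟨F.1, F.2.trans h⟩

lemma r_mem_hull {S : Set 𝔰.Γ} {F : Finset 𝔰.Γ} (hF : (F : Set 𝔰.Γ) ⊆ S) (x : X) :
    𝔰.r (w F) x ∈ 𝔰.hull w S :=
  subset_closure (mem_iUnion.2 ⟨⟨F, hF⟩, x, rfl⟩)

variable {w}

/-- The hull of a countable set lies in the range of one retraction `r t`, where `t` is a supremum
of `w` along an exhausting sequence of finite sets. -/
lemma hull_countable (hw : Monotone w) {S : Set 𝔰.Γ} (hS : S.Countable) :
    ∃ t, 𝔰.hull w S ⊆ range (𝔰.r t) ∧ ∀ x y,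
      (∀ F : Finset 𝔰.Γ, (F : Set 𝔰.Γ) ⊆ S → 𝔰.r (w F) x = 𝔰.r (w F) y) →
      𝔰.r t x = 𝔰.r t y := by
  classical
  have hG : ∃ G : ℕ → Finset 𝔰.Γ, Monotone G ∧ (∀ n, (G n : Set 𝔰.Γ) ⊆ S) ∧
      ∀ F : Finset 𝔰.Γ, (F : Set 𝔰.Γ) ⊆ S → ∃ n, F ⊆ G n := by
    rcases S.eq_empty_or_nonempty with rfl | hne
    · refine ⟨fun _ => ∅, fun _ _ _ => le_rfl, by simp, fun F hF => ⟨0, ?_⟩⟩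
      intro a ha; exact absurd (hF ha) (by simp)
    · obtain ⟨e, rfl⟩ := hS.exists_eq_range hne
      have hmono : Monotone fun n => (Finset.range n).image e :=
        fun a b h => Finset.image_subset_image (Finset.range_mono h)
      refine ⟨_, hmono, fun n => ?_, ?_⟩
      · simp only [Finset.coe_image]; exact image_subset_range _ _
      · intro F
        induction F using Finset.induction_on with
        | empty => intro _; exact ⟨0, by simp⟩
        | insert a F ha ih =>
          intro hF
          rw [Finset.coe_insert, insert_subset_iff] at hF
          obtain ⟨n, hn⟩ := ih hF.2
          obtain ⟨m, rfl⟩ := hF.1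
          refine ⟨max n (m + 1), Finset.insert_subset ?_ ?_⟩
          · exact hmono (le_max_right n (m + 1)) (Finset.mem_image_of_mem e (by simp))
          · exact hn.trans (hmono (le_max_left _ _))
  obtain ⟨G, hGm, hGS, hGc⟩ := hG
  obtain ⟨t, ht, k, hk⟩ := 𝔰.exists_sup (fun n => w (G n)) (hw.comp hGm)
  refine ⟨t, ?_, fun x y h => 𝔰.eq_of_forall_eq hk fun n => h _ (hGS n)⟩
  refine closure_minimal (iUnion_subset fun F => ?_) (𝔰.isClosed_range t)
  obtain ⟨n, hn⟩ := hGc F.1 F.2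
  exact 𝔰.range_mono ((hw hn).trans (ht.1 ⟨n, rfl⟩))

lemma hull_tight (hD : 𝔰.inducedSet = univ) {S : Set 𝔰.Γ} {x : X} (hx : x ∈ 𝔰.hull w S) :
    ∃ T ⊆ S, T.Countable ∧ x ∈ 𝔰.hull w T := by
  obtain ⟨C, hC, hCc, hxC⟩ := 𝔰.tight (by rw [hD]; exact subset_univ _)
    (by rw [hD]; exact mem_univ _) hx
  have : ∀ c : C, ∃ F : Finset 𝔰.Γ, (F : Set 𝔰.Γ) ⊆ S ∧ (c : X) ∈ range (𝔰.r (w F)) := by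
    intro c
    obtain ⟨F, hF⟩ := mem_iUnion.1 (hC c.2)
    exact ⟨F.1, F.2, hF⟩
  choose F hFS hF using this
  haveI := hCc.to_subtype
  refine ⟨⋃ c, (F c : Set 𝔰.Γ), iUnion_subset hFS,
    countable_iUnion fun c => (F c).countable_toSet, closure_mono ?_ hxC⟩
  intro c hc
  exact mem_iUnion.2 ⟨⟨F ⟨c, hc⟩, subset_iUnion (fun c => (F c : Set 𝔰.Γ)) ⟨c, hc⟩⟩, hF ⟨c, hc⟩⟩

/-- A point of `hull w S` is determined by its images under the retractions `r (w F)`. -/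
lemma hull_unique (hD : 𝔰.inducedSet = univ) (hw : Monotone w) {S : Set 𝔰.Γ} {x y : X}
    (hx : x ∈ 𝔰.hull w S) (hy : y ∈ 𝔰.hull w S)
    (h : ∀ F : Finset 𝔰.Γ, (F : Set 𝔰.Γ) ⊆ S → 𝔰.r (w F) x = 𝔰.r (w F) y) : x = y := by
  obtain ⟨T₁, h₁, hc₁, hx₁⟩ := 𝔰.hull_tight hD hx
  obtain ⟨T₂, h₂, hc₂, hx₂⟩ := 𝔰.hull_tight hD hy
  obtain ⟨t, ht, htu⟩ := 𝔰.hull_countable hw (hc₁.union hc₂)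
  have h1 := (𝔰.mem_range_iff _ _).1 (ht (𝔰.hull_mono w subset_union_left hx₁))
  have h2 := (𝔰.mem_range_iff _ _).1 (ht (𝔰.hull_mono w subset_union_right hx₂))
  rw [← h1, ← h2]
  exact htu x y fun F hF => h F (hF.trans (union_subset h₁ h₂))

lemma hull_exists (hw : Monotone w) (S : Set 𝔰.Γ) (x : X) : ∃ y ∈ 𝔰.hull w S,
    ∀ F : Finset 𝔰.Γ, (F : Set 𝔰.Γ) ⊆ S → 𝔰.r (w F) y = 𝔰.r (w F) x := by
  classical
  let B : {F : Finset 𝔰.Γ // (F : Set 𝔰.Γ) ⊆ S} → Set X := fun F =>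
    𝔰.hull w S ∩ {y | 𝔰.r (w F.1) y = 𝔰.r (w F.1) x}
  have hcl : ∀ F, IsClosed (B F) := fun F =>
    (𝔰.isClosed_hull w S).inter (isClosed_eq (𝔰.r _).continuous continuous_const)
  haveI : Nonempty {F : Finset 𝔰.Γ // (F : Set 𝔰.Γ) ⊆ S} := ⟨⟨∅, by simp⟩⟩
  have : (⋂ F, B F).Nonempty := by
    refine IsCompact.nonempty_iInter_of_directed_nonempty_isCompact_isClosed B ?_ ?_
      (fun F => (hcl F).isCompact) hcl
    · intro F G
      refine ⟨⟨F.1 ∪ G.1, by rw [Finset.coe_union]; exact union_subset F.2 G.2⟩, ?_, ?_⟩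
      · intro y hy
        exact ⟨hy.1, 𝔰.r_eq_of_r_eq (hw Finset.subset_union_left) hy.2⟩
      · intro y hy
        exact ⟨hy.1, 𝔰.r_eq_of_r_eq (hw Finset.subset_union_right) hy.2⟩
    · intro F
      exact ⟨𝔰.r (w F.1) x, 𝔰.r_mem_hull w F.2 x, 𝔰.isRetraction _ _⟩
  obtain ⟨y, hy⟩ := this
  rw [mem_iInter] at hy
  exact ⟨y, (hy ⟨∅, by simp⟩).1, fun F hF => (hy ⟨F, hF⟩).2⟩

/-- For a full skeleton there is a family of retractions onto the sets `hull w S`, indexed by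
arbitrary sets `S` of indices, that is compatible with inclusions. -/
lemma exists_hull_retractions (hD : 𝔰.inducedSet = univ) (hw : Monotone w) :
    ∃ R : Set 𝔰.Γ → C(X, X), (∀ S x, R S x ∈ 𝔰.hull w S) ∧
      (∀ S x, ∀ F : Finset 𝔰.Γ, (F : Set 𝔰.Γ) ⊆ S → 𝔰.r (w F) (R S x) = 𝔰.r (w F) x) := by
  choose R hR1 hR2 using 𝔰.hull_exists hw
  have hcont : ∀ S, Continuous (R S) := by
    intro S
    rw [continuous_iff_isClosed]
    intro C hC
    let Gr : Set (X × X) := {p | p.2 ∈ 𝔰.hull w S ∩ C ∧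
      ∀ F : Finset 𝔰.Γ, (F : Set 𝔰.Γ) ⊆ S → 𝔰.r (w F) p.2 = 𝔰.r (w F) p.1}
    have hGr : IsClosed Gr := by
      refine IsClosed.inter (((𝔰.isClosed_hull w S).inter hC).preimage continuous_snd) ?_
      change IsClosed {p : X × X | ∀ F : Finset 𝔰.Γ, (F : Set 𝔰.Γ) ⊆ S →
        𝔰.r (w F) p.2 = 𝔰.r (w F) p.1}
      simp only [setOf_forall]
      exact isClosed_iInter fun F => isClosed_iInter fun hF =>
        isClosed_eq ((𝔰.r _).continuous.comp continuous_snd)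
          ((𝔰.r _).continuous.comp continuous_fst)
    have : R S ⁻¹' C = Prod.fst '' Gr := by
      ext x
      constructor
      · intro hx
        exact ⟨(x, R S x), ⟨⟨hR1 S x, hx⟩, hR2 S x⟩, rfl⟩
      · rintro ⟨⟨a, b⟩, ⟨⟨hb1, hb2⟩, hb3⟩, rfl⟩
        have : R S a = b := 𝔰.hull_unique hD hw (hR1 S a) hb1 fun F hF => by
          rw [hR2 S a F hF]; exact (hb3 F hF).symm
        show R S a ∈ C
        rw [this]; exact hb2
    rw [this]
    exact (hGr.isCompact.image continuous_fst).isClosed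
  exact ⟨fun S => ⟨R S, hcont S⟩, hR1, hR2⟩

/-- Point-countable families of continuous functions separating the points of `hull w S`, by
induction on the cardinality of `S`. For countable `S` the hull lies in a metrizable range; an
uncountable `S` is written as an increasing union of smaller sets, and the families of consecutive
pieces are combined through the retractions onto the hulls. -/
lemma exists_family (hD : 𝔰.inducedSet = univ) (hw : Monotone w) :
    ∀ (κ : Cardinal.{u}) (S : Set 𝔰.Γ), Cardinal.mk S = κ →
      ∃ (ι : Type u) (e : ι → C(X, ℝ)), (∀ x, {i | e i x ≠ 0}.Countable) ∧
        ∀ x ∈ 𝔰.hull w S, ∀ y ∈ 𝔰.hull w S, (∀ i, e i x = e i y) → x = y := by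
  obtain ⟨R, hR1, hR2⟩ := 𝔰.exists_hull_retractions hD hw
  have hRu : ∀ S x y, y ∈ 𝔰.hull w S → (∀ F : Finset 𝔰.Γ, (F : Set 𝔰.Γ) ⊆ S →
      𝔰.r (w F) y = 𝔰.r (w F) x) → y = R S x := fun S x y hy h =>
    𝔰.hull_unique hD hw hy (hR1 S x) fun F hF => by rw [h F hF, hR2 S x F hF]
  have hRid : ∀ S x, x ∈ 𝔰.hull w S → R S x = x := fun S x hx => (hRu S x x hx fun _ _ => rfl).symm
  have hRR : ∀ S T x, S ⊆ T → R S (R T x) = R S x := fun S T x h =>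
    (hRu S (R T x) (R S x) (hR1 S x) fun F hF => by
      rw [hR2 S x F hF, hR2 T x F (hF.trans h)]).symm
  have hRcount : ∀ S x, ∃ T ⊆ S, T.Countable ∧ ∀ T', T ⊆ T' → T' ⊆ S → R T' x = R S x := by
    intro S x
    obtain ⟨T, hTS, hTc, hx⟩ := 𝔰.hull_tight hD (hR1 S x)
    refine ⟨T, hTS, hTc, fun T' h1 h2 => ?_⟩
    rw [← hRR T' S x h2]
    exact hRid _ _ (𝔰.hull_mono w h1 hx)
  -- the countable case: the hull is contained in a metrizable range
  have hcountable : ∀ S : Set 𝔰.Γ, S.Countable →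
      ∃ (ι : Type u) (e : ι → C(X, ℝ)), (∀ x, {i | e i x ≠ 0}.Countable) ∧
        ∀ x ∈ 𝔰.hull w S, ∀ y ∈ 𝔰.hull w S, (∀ i, e i x = e i y) → x = y := by
    intro S hS
    obtain ⟨t, ht, -⟩ := 𝔰.hull_countable hw hS
    haveI := 𝔰.metrizable t
    haveI : CompactSpace (range (𝔰.r t)) := isCompact_iff_compactSpace.1 (𝔰.isCompact_range t)
    letI := metrizableSpaceMetric (range (𝔰.r t))
    obtain ⟨B, hBc, hBd⟩ := exists_countable_dense (range (𝔰.r t))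
    haveI := hBc.to_subtype
    let ρ : X → range (𝔰.r t) := rangeFactorization (𝔰.r t)
    have hρ : Continuous ρ := (𝔰.r t).continuous.rangeFactorization
    refine ⟨B, fun b => ⟨fun x => dist (ρ x) b, by fun_prop⟩, fun x => to_countable _, ?_⟩
    intro x hx y hy h
    have h1 : ∀ z : range (𝔰.r t), dist (ρ x) z = dist (ρ y) z := by
      intro z
      have : (fun z => dist (ρ x) z) = fun z => dist (ρ y) z := by
        refine Continuous.ext_on hBd (by fun_prop) (by fun_prop) fun b hb => ?_
        exact h ⟨b, hb⟩
      exact congrFun this z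
    have h2 : ρ x = ρ y := by
      have := h1 (ρ y)
      rwa [dist_self, dist_eq_zero] at this
    have h3 : 𝔰.r t x = 𝔰.r t y := congrArg Subtype.val h2
    rwa [(𝔰.mem_range_iff _ _).1 (ht hx), (𝔰.mem_range_iff _ _).1 (ht hy)] at h3
  intro κ
  induction κ using WellFoundedLT.induction with
  | ind κ ih =>
  intro S hSκ
  by_cases hS : S.Countable
  · exact hcountable S hS
  have hκ : Cardinal.aleph0 < κ := by
    rw [← hSκ, ← not_le, Cardinal.le_aleph0_iff_set_countable]; exact hS
  have hcard : Cardinal.mk κ.ord.ToType = Cardinal.mk S := by rw [hSκ]; simp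
  obtain ⟨g⟩ := Cardinal.eq.1 hcard
  let T := κ.ord.ToType
  let seg : Set T → Set 𝔰.Γ := fun J => (fun a => (g a : 𝔰.Γ)) '' J
  have hseg : ∀ {I J : Set T}, I ⊆ J → seg I ⊆ seg J := fun h => image_mono h
  have hsegcard : ∀ a : T, Cardinal.mk (seg (Iic a)) < κ := by
    intro a
    refine Cardinal.mk_image_le.trans_lt ?_
    have : (Iic a : Set T) = insert a (Iio a) := by
      ext b; simp [le_iff_eq_or_lt]
    rw [this]
    refine Cardinal.mk_insert_le.trans_lt ?_
    exact Cardinal.add_lt_of_lt hκ.le (Cardinal.mk_Iio_toType_ord_lt a)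
      (Cardinal.one_lt_aleph0.trans hκ)
  have hfam := fun a : T => ih _ (hsegcard a) (seg (Iic a)) rfl
  choose ι e he1 he2 using hfam
  obtain ⟨ι₀, e₀, he₀1, he₀2⟩ := hcountable ∅ countable_empty
  -- only countably many jumps
  have hjump : ∀ x, {a : T | R (seg (Iic a)) x ≠ R (seg (Iio a)) x}.Countable := by
    intro x
    set B := {a : T | R (seg (Iic a)) x ≠ R (seg (Iio a)) x} with hB
    have hQ : ∀ J : Set T, IsLowerSet J → (∀ c ∈ J, (B ∩ Iio c).Countable) →
        (B ∩ J).Countable := by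
      intro J hJ hc
      obtain ⟨T', hT'J, hT'c, hT'⟩ := hRcount (seg J) x
      obtain ⟨J', hJ'J, hJ'⟩ := subset_image_iff.1 hT'J
      have hJ'c : J'.Countable :=
        countable_of_injective_of_countable_image (f := fun a => (g a : 𝔰.Γ))
          (Subtype.val_injective.comp g.injective).injOn (by rw [hJ']; exact hT'c)
      by_cases hbd : ∃ c ∈ J, ∀ b ∈ J', b < c
      · obtain ⟨c, hcJ, hcb⟩ := hbd
        refine (hc c hcJ).mono ?_
        rintro a ⟨haB, haJ⟩
        refine ⟨haB, ?_⟩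
        by_contra hac
        rw [mem_Iio, not_lt] at hac
        refine haB ?_
        have h1 : T' ⊆ seg (Iio a) := by
          rw [← hJ']; exact hseg fun b hb => (hcb b hb).trans_le hac
        have h2 : seg (Iic a) ⊆ seg J := hseg fun b hb => hJ hb haJ
        have h3 : seg (Iio a) ⊆ seg (Iic a) := hseg Iio_subset_Iic_self
        rw [hT' _ (h1.trans h3) h2, hT' _ h1 (h3.trans h2)]
      · push Not at hbd
        have : B ∩ J ⊆ ⋃ b ∈ J', insert b (B ∩ Iio b) := by
          rintro a ⟨haB, haJ⟩
          obtain ⟨b, hb, hab⟩ := hbd a haJ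
          refine mem_iUnion₂.2 ⟨b, hb, ?_⟩
          rcases hab.eq_or_lt with rfl | h
          · exact mem_insert _ _
          · exact mem_insert_of_mem _ ⟨haB, h⟩
        exact (hJ'c.biUnion fun b hb => (hc b (hJ'J hb)).insert b).mono this
    have hall : ∀ c : T, (B ∩ Iio c).Countable := by
      intro c
      induction c using WellFoundedLT.induction with
      | ind c ihc => exact hQ _ (isLowerSet_Iio c) fun d hd => ihc d hd
    simpa using hQ univ isLowerSet_univ fun c _ => hall c
  refine ⟨ι₀ ⊕ (Σ a : T, ι a), Sum.elim (fun i => (e₀ i).comp (R ∅))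
    (fun p => (e p.1 p.2).comp (R (seg (Iic p.1))) - (e p.1 p.2).comp (R (seg (Iio p.1)))),
    ?_, ?_⟩
  · intro x
    have hsub : {i : ι₀ ⊕ (Σ a : T, ι a) | Sum.elim (fun i => (e₀ i).comp (R ∅))
        (fun p => (e p.1 p.2).comp (R (seg (Iic p.1))) -
          (e p.1 p.2).comp (R (seg (Iio p.1)))) i x ≠ 0} ⊆
        Sum.inl '' {i | e₀ i (R ∅ x) ≠ 0} ∪
        Sum.inr '' (⋃ a ∈ {a : T | R (seg (Iic a)) x ≠ R (seg (Iio a)) x},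
          Sigma.mk a '' ({i | e a i (R (seg (Iic a)) x) ≠ 0} ∪
            {i | e a i (R (seg (Iio a)) x) ≠ 0})) := by
      rintro (i | ⟨a, i⟩) hi
      · exact Or.inl ⟨i, hi, rfl⟩
      · refine Or.inr ⟨⟨a, i⟩, ?_, rfl⟩
        have hi' : e a i (R (seg (Iic a)) x) - e a i (R (seg (Iio a)) x) ≠ 0 := hi
        refine mem_iUnion₂.2 ⟨a, ?_, i, ?_, rfl⟩
        · intro h
          rw [h, sub_self] at hi'
          exact hi' rfl
        · by_contra hcon
          rw [mem_union, not_or] at hcon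
          simp only [mem_setOf_eq, not_not] at hcon
          rw [hcon.1, hcon.2, sub_self] at hi'
          exact hi' rfl
    refine Countable.mono hsub (Countable.union ((he₀1 _).image _) (Countable.image ?_ _))
    exact (hjump x).biUnion fun a _ => ((he1 a _).union (he1 a _)).image _
  · intro x hx y hy hxy
    have h0 : R ∅ x = R ∅ y := he₀2 _ (hR1 ∅ x) _ (hR1 ∅ y) fun i => hxy (Sum.inl i)
    have hglue : ∀ J : Set T, (∀ b ∈ J, R (seg (Iic b)) x = R (seg (Iic b)) y) →
        R (seg J) x = R (seg J) y := by
      intro J hJ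
      refine (hRu (seg J) y (R (seg J) x) (hR1 _ _) fun F hF => ?_)
      rw [hR2 _ _ F hF]
      obtain ⟨J', hJ'J, hJ'⟩ := subset_image_iff.1 hF
      have hJ'f : J'.Finite := by
        refine Finite.of_finite_image (f := fun a => (g a : 𝔰.Γ)) (by rw [hJ']; exact F.finite_toSet)
          (Subtype.val_injective.comp g.injective).injOn
      rcases J'.eq_empty_or_nonempty with rfl | hne
      · have hF' : (F : Set 𝔰.Γ) ⊆ ∅ := by rw [← hJ']; simp
        rw [← hR2 ∅ x F hF', h0, hR2 ∅ y F hF']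
      · obtain ⟨b, hb, hbm⟩ := hJ'f.exists_maximal hne
        have hF' : (F : Set 𝔰.Γ) ⊆ seg (Iic b) := by
          rw [← hJ']
          refine hseg fun c hc => ?_
          rcases le_total c b with h | h
          · exact h
          · exact hbm hc h
        rw [← hR2 _ x F hF', hJ b (hJ'J hb), hR2 _ y F hF']
    have hall : ∀ a : T, R (seg (Iic a)) x = R (seg (Iic a)) y := by
      intro a
      induction a using WellFoundedLT.induction with
      | ind a iha =>
        have hlt := hglue (Iio a) fun b hb => iha b hb
        refine he2 a _ (hR1 _ _) _ (hR1 _ _) fun i => ?_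
        have := hxy (Sum.inr ⟨a, i⟩)
        simp only [Sum.elim_inr, ContinuousMap.sub_apply, ContinuousMap.comp_apply, hlt] at this
        linarith
    have hS' : seg univ = S := by
      ext s
      constructor
      · rintro ⟨a, -, rfl⟩; exact (g a).2
      · intro hs; exact ⟨g.symm ⟨s, hs⟩, mem_univ _, by simp⟩
    have := hglue univ fun b _ => hall b
    rwa [hS', hRid S x hx, hRid S y hy] at this

/-- A compact space with a full retractional skeleton is Corson. -/
theorem isCorsonCompact_of_full (hD : 𝔰.inducedSet = univ) : IsCorsonCompact X := by
  obtain ⟨w, hw, hwF⟩ := 𝔰.exists_finset_upper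
  obtain ⟨ι, e, he1, he2⟩ := 𝔰.exists_family hD hw _ univ rfl
  have hhull : ∀ x, x ∈ 𝔰.hull w univ := by
    intro x
    have hx : x ∈ 𝔰.inducedSet := by rw [hD]; exact mem_univ x
    obtain ⟨s, hs⟩ := 𝔰.mem_inducedSet.1 hx
    refine subset_closure (mem_iUnion.2 ⟨⟨{s}, subset_univ _⟩, ?_⟩)
    exact 𝔰.range_mono (hwF {s} s (by simp)) ((𝔰.mem_range_iff _ _).2 hs)
  let E : X → ι → ℝ := fun x i => e i x
  have hE : Continuous E := continuous_pi fun i => (e i).continuous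
  have hEi : Function.Injective E := fun x y h => he2 x (hhull x) y (hhull y) (congrFun h)
  have hemb : Topology.IsEmbedding E := (hE.isClosedEmbedding hEi).isEmbedding
  refine ⟨ι, range E, _root_.isCompact_range hE, ?_, ⟨hemb.toHomeomorph⟩⟩
  rintro _ ⟨x, rfl⟩
  exact he1 x

end RetractionalSkeleton

/-! ### The dual unit ball -/

section DualBall

variable {X : Type u} [NormedAddCommGroup X] [NormedSpace ℝ X]

instance dualBall_compactSpace : CompactSpace (dualBall X) := by
  have h : dualBall X = WeakDual.toStrongDual ⁻¹' Metric.closedBall (0 : StrongDual ℝ X) 1 := by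
    ext φ
    simp only [dualBall, mem_setOf_eq, mem_preimage, mem_closedBall_zero_iff]
    rw [ContinuousLinearMap.opNorm_le_iff zero_le_one]
    simp [Real.norm_eq_abs]
  rw [← isCompact_iff_compactSpace, h]
  exact WeakDual.isCompact_closedBall (𝕜 := ℝ) (E := X) 0 1

lemma dualBall_ext {z z' : dualBall X} (h : ∀ x, z.1 x = z'.1 x) : z = z' :=
  Subtype.ext (DFunLike.ext _ _ h)

lemma dualBall_eval_continuous (x : X) : Continuous fun z : dualBall X => z.1 x :=
  (WeakDual.eval_continuous x).comp continuous_subtype_val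

lemma dualBall_continuous_of_eval {α : Type*} [TopologicalSpace α] {g : α → dualBall X}
    (h : ∀ x, Continuous fun a => (g a).1 x) : Continuous g :=
  Continuous.subtype_mk (WeakDual.continuous_of_continuous_eval h) _

lemma dualBall_isInducing : IsInducing fun (z : dualBall X) (x : X) => z.1 x :=
  IsInducing.comp (g := fun (z : WeakDual ℝ X) (x : X) => z x) ⟨rfl⟩ IsInducing.subtypeVal

lemma dualBall_tendsto {α : Type*} {l : Filter α} {g : α → dualBall X} {z : dualBall X}
    (h : ∀ x, Tendsto (fun a => (g a).1 x) l (𝓝 (z.1 x))) : Tendsto g l (𝓝 z) := by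
  rw [dualBall_isInducing.tendsto_nhds_iff, tendsto_pi_nhds]
  exact h

lemma dualBall_apply_le (z : dualBall X) (x : X) {c : ℝ} (h : ‖x‖ ≤ c) : z.1 x ≤ c :=
  (le_abs_self _).trans ((z.2 x).trans h)

/-- The element of the dual ball given by a linear functional of norm at most one. -/
noncomputable def ballMk (φ : X →ₗ[ℝ] ℝ) (h : ∀ x, |φ x| ≤ ‖x‖) : dualBall X :=
  ⟨StrongDual.toWeakDual (φ.mkContinuous 1 fun x => by simpa using h x), h⟩

@[simp] lemma ballMk_apply (φ : X →ₗ[ℝ] ℝ) (h : ∀ x, |φ x| ≤ ‖x‖) (x : X) :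
    (ballMk φ h).1 x = φ x := rfl

/-- A linear isometric equivalence induces a homeomorphism of the dual balls. -/
noncomputable def dualBallHomeo {X' : Type u} [NormedAddCommGroup X'] [NormedSpace ℝ X']
    (e : X ≃ₗᵢ[ℝ] X') : dualBall X' ≃ₜ dualBall X where
  toFun z := ballMk ((WeakDual.toStrongDual z.1).toLinearMap ∘ₗ e.toLinearEquiv.toLinearMap)
    fun x => by simpa using z.2 (e x)
  invFun z := ballMk ((WeakDual.toStrongDual z.1).toLinearMap ∘ₗ e.symm.toLinearEquiv.toLinearMap)
    fun x => by simpa using z.2 (e.symm x)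
  left_inv z := dualBall_ext fun x => by simp
  right_inv z := dualBall_ext fun x => by simp
  continuous_toFun := dualBall_continuous_of_eval fun x => dualBall_eval_continuous (e x)
  continuous_invFun := dualBall_continuous_of_eval fun x => dualBall_eval_continuous (e.symm x)

lemma HasRetractionalSkeleton.of_homeomorph {K L : Type u} [TopologicalSpace K]
    [TopologicalSpace L] (h : K ≃ₜ L) (hK : HasRetractionalSkeleton K) :
    HasRetractionalSkeleton L := by
  obtain ⟨𝔰⟩ := hK
  refine ⟨{ Γ := 𝔰.Γ
            po := 𝔰.po
            ne := 𝔰.ne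
            directed := 𝔰.directed
            r := fun s => ⟨fun x => h (𝔰.r s (h.symm x)), by fun_prop⟩
            isRetraction := fun s x => by simp [𝔰.isRetraction]
            metrizable := ?_
            tendsto_id := ?_
            comp_eq_of_le := fun s t hst x => by simp [𝔰.comp_eq_of_le s t hst]
            sup_seq := ?_ }⟩
  · intro s
    haveI := 𝔰.metrizable s
    have hmem : ∀ y ∈ range (fun x => h (𝔰.r s (h.symm x))), h.symm y ∈ range (𝔰.r s) := by
      rintro _ ⟨x, rfl⟩
      simp
    let j : range (fun x => h (𝔰.r s (h.symm x))) → range (𝔰.r s) :=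
      fun y => ⟨h.symm y.1, hmem y.1 y.2⟩
    have hj : Topology.IsEmbedding j := by
      have h1 : Topology.IsEmbedding (Subtype.val ∘ j) :=
        h.symm.isEmbedding.comp Topology.IsEmbedding.subtypeVal
      exact Topology.IsEmbedding.of_comp (by fun_prop) continuous_subtype_val h1
    exact hj.metrizableSpace
  · intro x
    have := (h.continuous.tendsto _).comp (𝔰.tendsto_id (h.symm x))
    rw [h.apply_symm_apply] at this
    exact this
  · intro f hf
    obtain ⟨t, ht, htx⟩ := 𝔰.sup_seq f hf
    exact ⟨t, ht, fun x => (h.continuous.tendsto _).comp (htx (h.symm x))⟩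

end DualBall

/-! ### Evaluations on function spaces -/

section Eval

variable {L : Type u} [TopologicalSpace L] [CompactSpace L]

/-- The hereditary skeleton condition: the dual ball of each closed subspace of `C(L)` has a
retractional skeleton. -/
def HeredSkeleton (L : Type u) [TopologicalSpace L] [CompactSpace L] : Prop :=
  ∀ Y : Submodule ℝ C(L, ℝ), IsClosed (Y : Set C(L, ℝ)) → HasRetractionalSkeleton ↥(dualBall ↥Y)

/-- The hereditary skeleton condition passes to continuous Hausdorff images, since `C(L)` embeds
isometrically in `C(K)`. -/
lemma HeredSkeleton.of_surjective {K : Type u} [TopologicalSpace K] [CompactSpace K]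
    (hK : HeredSkeleton K) (π : C(K, L)) (hπ : Function.Surjective π) : HeredSkeleton L := by
  intro Y hY
  have hnorm : ∀ f : C(L, ℝ), ‖f.comp π‖ = ‖f‖ := by
    intro f
    refine le_antisymm ?_ ?_
    · rw [ContinuousMap.norm_le _ (norm_nonneg _)]
      intro x; exact f.norm_coe_le_norm (π x)
    · rw [ContinuousMap.norm_le _ (norm_nonneg _)]
      intro y
      obtain ⟨x, rfl⟩ := hπ y
      exact (f.comp π).norm_coe_le_norm x
  let T : C(L, ℝ) →ₗᵢ[ℝ] C(K, ℝ) :=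
    { toFun := fun f => f.comp π
      map_add' := fun f g => rfl
      map_smul' := fun c f => rfl
      norm_map' := hnorm }
  let E : Y ≃ₗᵢ[ℝ] Y.map T.toLinearMap :=
    { toLinearEquiv := Y.equivMapOfInjective T.toLinearMap T.injective
      norm_map' := fun y => T.norm_map y.1 }
  have hcl : IsClosed ((Y.map T.toLinearMap : Submodule ℝ C(K, ℝ)) : Set C(K, ℝ)) := by
    rw [Submodule.map_coe]
    exact T.isometry.isClosedEmbedding.isClosedMap _ hY
  exact (hK _ hcl).of_homeomorph (dualBallHomeo E)

variable (Y : Submodule ℝ C(L, ℝ))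

/-- Evaluation at a point, as an element of the dual ball of a function space. -/
noncomputable def evBall (x : L) : dualBall Y :=
  ballMk { toFun := fun f => f.1 x, map_add' := fun _ _ => rfl, map_smul' := fun _ _ => rfl }
    fun f => f.1.norm_coe_le_norm x

@[simp] lemma evBall_apply (x : L) (f : Y) : (evBall Y x).1 f = f.1 x := rfl

lemma evBall_continuous : Continuous (evBall Y) :=
  dualBall_continuous_of_eval fun f => f.1.continuous

/-- The convex combination `∑ c x δ_x` of evaluations, as an element of the dual ball. -/
noncomputable def combBall (F : Finset L) (c : L → ℝ) (hc : ∀ x ∈ F, 0 ≤ c x)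
    (hs : ∑ x ∈ F, c x = 1) : dualBall Y :=
  ballMk { toFun := fun f => ∑ x ∈ F, c x * f.1 x
           map_add' := fun f g => by simp [mul_add, Finset.sum_add_distrib]
           map_smul' := fun a f => by simp [Finset.mul_sum, mul_left_comm] }
    fun f => by
      refine (Finset.abs_sum_le_sum_abs _ _).trans ?_
      calc ∑ x ∈ F, |c x * f.1 x| ≤ ∑ x ∈ F, c x * ‖f‖ := by
            refine Finset.sum_le_sum fun x hx => ?_
            rw [abs_mul, abs_of_nonneg (hc x hx)]
            exact mul_le_mul_of_nonneg_left (f.1.norm_coe_le_norm x) (hc x hx)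
        _ = ‖f‖ := by rw [← Finset.sum_mul, hs, one_mul]

@[simp] lemma combBall_apply (F : Finset L) (c : L → ℝ) (hc : ∀ x ∈ F, 0 ≤ c x)
    (hs : ∑ x ∈ F, c x = 1) (f : Y) :
    (combBall Y F c hc hs).1 f = ∑ x ∈ F, c x * f.1 x := rfl

variable {Y}

/-- A functional of norm one attaining its norm at a function peaking exactly on `F` is supported
by `F`. -/
lemma apply_eq_zero_of_peak {F : Set L} {f : Y}
    (hfoff : ∀ x, x ∉ F → |f.1 x| < 1) (hf1 : ∀ x, |f.1 x| ≤ 1) {z : dualBall Y}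
    (hz : 1 ≤ z.1 f) {h : Y} (hh : ∀ x ∈ F, h.1 x = 0) : z.1 h = 0 := by
  have key : ∀ δ > 0, ∃ M > 0, ∀ x, |h.1 x| ≤ δ + M * (1 - |f.1 x|) := by
    intro δ hδ
    have hcl : IsCompact {x | δ ≤ |h.1 x|} :=
      (isClosed_le continuous_const (by fun_prop)).isCompact
    rcases {x | δ ≤ |h.1 x|}.eq_empty_or_nonempty with he | hne
    · refine ⟨1, one_pos, fun x => ?_⟩
      have : ¬ δ ≤ |h.1 x| := fun hx => by
        have : x ∈ {x | δ ≤ |h.1 x|} := hx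
        rw [he] at this; exact this
      have := hf1 x
      linarith
    · obtain ⟨x₀, hx₀, hmin⟩ := hcl.exists_isMinOn hne
        (f := fun x => 1 - |f.1 x|) (by fun_prop)
      have hm : 0 < 1 - |f.1 x₀| := by
        have : x₀ ∉ F := fun hxF => by
          have h1 : δ ≤ |h.1 x₀| := hx₀
          rw [hh _ hxF, abs_zero] at h1
          linarith
        linarith [hfoff x₀ this]
      refine ⟨‖h‖ / (1 - |f.1 x₀|) + 1, by positivity, fun x => ?_⟩
      have hfx := hf1 x
      by_cases hx : δ ≤ |h.1 x|
      · have h1 : 1 - |f.1 x₀| ≤ 1 - |f.1 x| := hmin hx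
        have h2 : |h.1 x| ≤ ‖h‖ := h.1.norm_coe_le_norm x
        have h3 : ‖h‖ = ‖h‖ / (1 - |f.1 x₀|) * (1 - |f.1 x₀|) := by field_simp
        have h4 : ‖h‖ / (1 - |f.1 x₀|) * (1 - |f.1 x₀|) ≤ ‖h‖ / (1 - |f.1 x₀|) * (1 - |f.1 x|) :=
          mul_le_mul_of_nonneg_left h1 (by positivity)
        nlinarith
      · have : 0 ≤ (‖h‖ / (1 - |f.1 x₀|) + 1) * (1 - |f.1 x|) :=
          mul_nonneg (by positivity) (by linarith)
        linarith
  have habs : ∀ δ > 0, |z.1 h| ≤ δ := by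
    intro δ hδ
    obtain ⟨M, hM, hMh⟩ := key δ hδ
    have hn : ∀ s : ℝ, |s| = 1 → ‖M • f + s • h‖ ≤ M + δ := by
      intro s hs
      change ‖(M • f + s • h).1‖ ≤ M + δ
      rw [ContinuousMap.norm_le _ (by positivity)]
      intro x
      have h1 : (M • f + s • h).1 x = M * f.1 x + s * h.1 x := rfl
      rw [h1, Real.norm_eq_abs]
      refine (abs_add_le _ _).trans ?_
      rw [abs_mul, abs_mul, hs, abs_of_pos hM]
      have := hMh x
      linarith
    have h1 := dualBall_apply_le z _ (hn 1 (by simp))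
    have h2 := dualBall_apply_le z _ (hn (-1) (by simp))
    simp only [map_add, map_smul, smul_eq_mul] at h1 h2
    have h3 : M ≤ M * z.1 f := by nlinarith
    rw [abs_le]
    constructor <;> linarith
  have : |z.1 h| ≤ 0 := le_of_forall_pos_le_add fun δ hδ => by simpa using habs δ hδ
  simpa using this

/-- Convex combinations of evaluations at the points of a peak set belong to the induced set of any
skeleton. -/
lemma comb_mem_of_peak (𝔰 : RetractionalSkeleton (dualBall Y)) (F : Finset L) (f : Y)
    (hf : ∀ x ∈ F, f.1 x = 1) (hfoff : ∀ x, x ∉ F → |f.1 x| < 1)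
    (hg : ∀ x ∈ F, ∃ g : Y, g.1 x = 1 ∧ ∀ y ∈ F, y ≠ x → g.1 y = 0)
    (c : L → ℝ) (hc : ∀ x ∈ F, 0 ≤ c x) (hs : ∑ x ∈ F, c x = 1) :
    combBall Y F c hc hs ∈ 𝔰.inducedSet := by
  classical
  have hf1 : ∀ x, |f.1 x| ≤ 1 := fun x => by
    by_cases hx : x ∈ F
    · simp [hf x hx]
    · exact (hfoff x hx).le
  have hg' : ∀ x, ∃ g : Y, x ∈ F → g.1 x = 1 ∧ ∀ y ∈ F, y ≠ x → g.1 y = 0 := fun x => by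
    by_cases hx : x ∈ F
    · obtain ⟨g, hg⟩ := hg x hx
      exact ⟨g, fun _ => hg⟩
    · exact ⟨0, fun h => absurd h hx⟩
  choose g hg using hg'
  have hzg : ∀ x ∈ F, (combBall Y F c hc hs).1 (g x) = c x := by
    intro x hx
    rw [combBall_apply, Finset.sum_eq_single x]
    · rw [(hg x hx).1, mul_one]
    · intro y hy hyx
      rw [(hg x hx).2 y hy hyx, mul_zero]
    · exact fun h => absurd hx h
  have hzf : (combBall Y F c hc hs).1 f = 1 := by
    rw [combBall_apply, ← hs]
    exact Finset.sum_congr rfl fun x hx => by rw [hf x hx, mul_one]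
  let V : ℕ → Set (dualBall Y) := fun n =>
    {z | 1 - 1 / ((n : ℝ) + 1) < z.1 f} ∩
      ⋂ x ∈ F, {z | |z.1 (g x) - c x| < 1 / ((n : ℝ) + 1)}
  have hV : ∀ n, IsOpen (V n) := fun n => by
    refine (isOpen_lt continuous_const (dualBall_eval_continuous f)).inter ?_
    refine isOpen_biInter_finset fun x _ => ?_
    exact isOpen_lt (((dualBall_eval_continuous (g x)).sub continuous_const).abs) continuous_const
  refine 𝔰.mem_of_iInter_closure hV (fun n => subset_closure ?_) fun z hz => ?_
  · have hn : (0 : ℝ) < 1 / ((n : ℝ) + 1) := by positivity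
    refine ⟨?_, mem_iInter₂.2 fun x hx => ?_⟩
    · rw [mem_setOf_eq, hzf]; linarith
    · rw [mem_setOf_eq, hzg x hx]; simpa using hn
  · have hcl1 : ∀ n : ℕ, 1 - 1 / ((n : ℝ) + 1) ≤ z.1 f := fun n =>
      closure_minimal (t := {z : dualBall Y | 1 - 1 / ((n : ℝ) + 1) ≤ z.1 f})
        (fun z hz => le_of_lt (by exact hz.1 : 1 - 1 / ((n : ℝ) + 1) < z.1 f))
        (isClosed_le continuous_const (dualBall_eval_continuous f)) (hz n)
    have hcl2 : ∀ x ∈ F, ∀ n : ℕ, |z.1 (g x) - c x| ≤ 1 / ((n : ℝ) + 1) := fun x hx n =>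
      closure_minimal (t := {z : dualBall Y | |z.1 (g x) - c x| ≤ 1 / ((n : ℝ) + 1)})
        (fun z hz => le_of_lt
          (by exact mem_iInter₂.1 hz.2 x hx : |z.1 (g x) - c x| < 1 / ((n : ℝ) + 1)))
        (isClosed_le (((dualBall_eval_continuous (g x)).sub continuous_const).abs)
          continuous_const) (hz n)
    have hlim : Tendsto (fun n : ℕ => 1 / ((n : ℝ) + 1)) atTop (𝓝 0) :=
      tendsto_one_div_add_atTop_nhds_zero_nat
    have h1 : 1 ≤ z.1 f := by
      have := le_of_tendsto (hlim.const_sub 1) (Eventually.of_forall hcl1)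
      simpa using this
    have h2 : ∀ x ∈ F, z.1 (g x) = c x := fun x hx => by
      have : |z.1 (g x) - c x| ≤ 0 := ge_of_tendsto hlim (Eventually.of_forall (hcl2 x hx))
      exact sub_eq_zero.1 (by simpa using this)
    refine dualBall_ext fun h => ?_
    have h3 : z.1 (h - ∑ x ∈ F, h.1 x • g x) = 0 := by
      refine apply_eq_zero_of_peak (F := F) (f := f) (fun x hx => hfoff x (by simpa using hx)) hf1
        h1 ?_
      intro y hy
      have hy' : y ∈ F := by simpa using hy
      have : (h - ∑ x ∈ F, h.1 x • g x).1 y = h.1 y - ∑ x ∈ F, h.1 x * (g x).1 y := by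
        simp
      rw [this, Finset.sum_eq_single y]
      · rw [(hg y hy').1]; ring
      · intro x hx hxy
        rw [(hg x hx).2 y hy' hxy.symm, mul_zero]
      · exact fun h => absurd hy' h
    rw [map_sub, map_sum, sub_eq_zero] at h3
    rw [h3, combBall_apply]
    refine Finset.sum_congr rfl fun x hx => ?_
    rw [map_smul, h2 x hx, smul_eq_mul, mul_comm]

lemma ev_mem_of_peak (𝔰 : RetractionalSkeleton (dualBall Y)) (x : L) (f : Y)
    (hf : f.1 x = 1) (hfoff : ∀ y, y ≠ x → |f.1 y| < 1) : evBall Y x ∈ 𝔰.inducedSet := by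
  have := comb_mem_of_peak 𝔰 {x} f (by simpa using hf) (by simpa using hfoff)
    (fun y hy => ⟨f, by rw [Finset.mem_singleton.1 hy]; exact hf, fun z hz hzy => by
      rw [Finset.mem_singleton] at hy hz; exact absurd (hz.trans hy.symm) hzy⟩)
    (fun _ => 1) (by simp) (by simp)
  convert this using 1
  exact dualBall_ext fun h => by simp

/-- If `Y` identifies the points `a` and `b`, and `a`, `b` are accumulated by points at which `Y`
contains bumps living where `v = 1`, respectively where `v = 0`, then the evaluation at `a` belongs
to the induced set. -/
lemma ev_mem_of_pair (𝔰 : RetractionalSkeleton (dualBall Y)) (e : Y) (he : e.1 = 1) {a b : L}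
    (hab : ∀ f : Y, f.1 a = f.1 b) (v : C(L, ℝ)) (hv0 : ∀ x, 0 ≤ v x) (hv1 : ∀ x, v x ≤ 1)
    (hvY : ∀ f : Y, f.1 a = 0 → v * f.1 ∈ Y)
    (ha : ∀ W ∈ 𝓝 a, ∃ x ∈ W, ∃ w : Y, (∀ y, 0 ≤ w.1 y) ∧ (∀ y, w.1 y ≤ 1) ∧ w.1 x = 1 ∧
      ∀ y, w.1 y * v y = w.1 y)
    (hb : ∀ W ∈ 𝓝 b, ∃ x ∈ W, ∃ w : Y, (∀ y, 0 ≤ w.1 y) ∧ (∀ y, w.1 y ≤ 1) ∧ w.1 x = 1 ∧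
      ∀ y, w.1 y * v y = 0) :
    evBall Y a ∈ 𝔰.inducedSet := by
  -- `B true`, `B false`: the bumps living where `v = 1`, respectively where `v = 0`
  let q : Bool → C(L, ℝ) := fun i => if i then 1 - v else v
  let B : Bool → Set Y := fun i =>
    {w | (∀ y, 0 ≤ w.1 y) ∧ (∀ y, w.1 y ≤ 1) ∧ ∀ y, w.1 y * q i y = 0}
  have hq0 : ∀ i x, 0 ≤ q i x := by
    intro i x
    cases i
    · exact hv0 x
    · have : q true x = 1 - v x := rfl
      rw [this]; linarith [hv1 x]
  have hq1 : ∀ i x, q i x ≤ 1 := by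
    intro i x
    cases i
    · exact hv1 x
    · have : q true x = 1 - v x := rfl
      rw [this]; linarith [hv0 x]
  have hqY : ∀ i, ∀ f : Y, f.1 a = 0 → q i * f.1 ∈ Y := by
    intro i f hf
    cases i
    · exact hvY f hf
    · have : q true * f.1 = f.1 - v * f.1 := by
        ext y
        have : q true y = 1 - v y := rfl
        simp only [ContinuousMap.mul_apply, ContinuousMap.sub_apply, this]; ring
      rw [this]; exact Y.sub_mem f.2 (hvY f hf)
  let V : Bool × ℕ → Set (dualBall Y) := fun p =>
    ⋃ w ∈ B p.1, {z | 1 - 1 / ((p.2 : ℝ) + 1) < z.1 w}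
  have hV : ∀ p, IsOpen (V p) := fun p => isOpen_biUnion fun w _ =>
    isOpen_lt continuous_const (dualBall_eval_continuous w)
  have hcl : ∀ p, evBall Y a ∈ closure (V p) := by
    rintro ⟨i, n⟩
    have hn : (0 : ℝ) < 1 / ((n : ℝ) + 1) := by positivity
    rw [mem_closure_iff]
    intro O hO hOa
    cases i
    · have hOb : evBall Y b ∈ O := by
        have : evBall Y a = evBall Y b := dualBall_ext fun f => hab f
        rwa [← this]
      obtain ⟨x, hxO, w, hw0, hw1, hwx, hwv⟩ :=
        hb _ ((hO.preimage (evBall_continuous Y)).mem_nhds hOb)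
      refine ⟨evBall Y x, hxO, mem_iUnion₂.2 ⟨w, ⟨hw0, hw1, hwv⟩, ?_⟩⟩
      simp only [mem_setOf_eq, evBall_apply, hwx]; linarith
    · obtain ⟨x, hxO, w, hw0, hw1, hwx, hwv⟩ :=
        ha _ ((hO.preimage (evBall_continuous Y)).mem_nhds hOa)
      refine ⟨evBall Y x, hxO, mem_iUnion₂.2 ⟨w, ⟨hw0, hw1, fun y => ?_⟩, ?_⟩⟩
      · have : q true y = 1 - v y := rfl
        rw [this, mul_sub, hwv, mul_one, sub_self]
      · simp only [mem_setOf_eq, evBall_apply, hwx]; linarith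
  refine 𝔰.mem_of_iInter_closure hV hcl fun z hz => ?_
  have hlim : Tendsto (fun n : ℕ => 1 / ((n : ℝ) + 1)) atTop (𝓝 0) :=
    tendsto_one_div_add_atTop_nhds_zero_nat
  have hze : z.1 e = 1 := by
    refine le_antisymm (dualBall_apply_le z _ ?_) ?_
    · change ‖e.1‖ ≤ 1
      rw [he, ContinuousMap.norm_le _ zero_le_one]; simp
    · have h1 : ∀ n : ℕ, 1 - 2 * (1 / ((n : ℝ) + 1)) ≤ z.1 e := fun n => by
        refine closure_minimal (t := {z : dualBall Y | 1 - 2 * (1 / ((n : ℝ) + 1)) ≤ z.1 e})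
          ?_ (isClosed_le continuous_const (dualBall_eval_continuous e)) (hz (true, n))
        intro y hy
        obtain ⟨w, ⟨hw0, hw1, -⟩, hyw⟩ := mem_iUnion₂.1 hy
        have hnorm : ‖(2 : ℝ) • w - e‖ ≤ 1 := by
          change ‖((2 : ℝ) • w - e).1‖ ≤ 1
          rw [ContinuousMap.norm_le _ zero_le_one]
          intro x
          have : ((2 : ℝ) • w - e).1 x = 2 * w.1 x - e.1 x := rfl
          rw [this, he, ContinuousMap.one_apply, Real.norm_eq_abs, abs_le]
          constructor <;> linarith [hw0 x, hw1 x]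
        have := dualBall_apply_le y _ hnorm
        rw [map_sub, map_smul, smul_eq_mul] at this
        simp only [mem_setOf_eq] at hyw ⊢
        linarith
      have := le_of_tendsto ((hlim.const_mul 2).const_sub 1) (Eventually.of_forall h1)
      simpa using this
  have hq : ∀ i, ∀ f : Y, ∀ hf : f.1 a = 0, ‖f‖ ≤ 1 → z.1 ⟨q i * f.1, hqY i f hf⟩ = 0 := by
    intro i f hf hfn
    have h1 : ∀ n : ℕ, |z.1 ⟨q i * f.1, hqY i f hf⟩| ≤ 1 / ((n : ℝ) + 1) := fun n => by
      refine closure_minimal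
        (t := {z : dualBall Y | |z.1 ⟨q i * f.1, hqY i f hf⟩| ≤ 1 / ((n : ℝ) + 1)})
        ?_ (isClosed_le (dualBall_eval_continuous _).abs continuous_const) (hz (i, n))
      intro y hy
      obtain ⟨w, ⟨hw0, hw1, hwq⟩, hyw⟩ := mem_iUnion₂.1 hy
      have hnorm : ∀ s : ℝ, |s| = 1 → ‖w + s • (⟨q i * f.1, hqY i f hf⟩ : Y)‖ ≤ 1 := by
        intro s hs
        change ‖(w + s • (⟨q i * f.1, hqY i f hf⟩ : Y)).1‖ ≤ 1
        rw [ContinuousMap.norm_le _ zero_le_one]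
        intro x
        have h0 : (w + s • (⟨q i * f.1, hqY i f hf⟩ : Y)).1 x = w.1 x + s * (q i x * f.1 x) := rfl
        rw [h0, Real.norm_eq_abs]
        have hfx : |f.1 x| ≤ 1 := (f.1.norm_coe_le_norm x).trans hfn
        rcases mul_eq_zero.1 (hwq x) with h | h
        · rw [h, zero_add, abs_mul, abs_mul, hs, one_mul, abs_of_nonneg (hq0 i x)]
          exact mul_le_one₀ (hq1 i x) (abs_nonneg _) hfx
        · rw [h, zero_mul, mul_zero, add_zero, abs_of_nonneg (hw0 x)]
          exact hw1 x
      have h2 := dualBall_apply_le y _ (hnorm 1 (by simp))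
      have h3 := dualBall_apply_le y _ (hnorm (-1) (by simp))
      simp only [map_add, map_smul, smul_eq_mul] at h2 h3
      simp only [mem_setOf_eq] at hyw ⊢
      rw [abs_le]
      constructor <;> linarith
    have : |z.1 ⟨q i * f.1, hqY i f hf⟩| ≤ 0 := ge_of_tendsto hlim (Eventually.of_forall h1)
    simpa using this
  have hf0 : ∀ f : Y, f.1 a = 0 → ‖f‖ ≤ 1 → z.1 f = 0 := by
    intro f hf hfn
    have : f = ⟨q true * f.1, hqY true f hf⟩ + ⟨q false * f.1, hqY false f hf⟩ := by
      refine Subtype.ext (ContinuousMap.ext fun y => ?_)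
      change f.1 y = (1 - v y) * f.1 y + v y * f.1 y
      ring
    rw [this, map_add, hq true f hf hfn, hq false f hf hfn, add_zero]
  have hf0' : ∀ f : Y, f.1 a = 0 → z.1 f = 0 := by
    intro f hf
    have hpos : 0 < ‖f‖ + 1 := by positivity
    have h1 := hf0 ((‖f‖ + 1)⁻¹ • f) (by
      change (‖f‖ + 1)⁻¹ * f.1 a = 0
      rw [hf, mul_zero]) (by
      change ‖(‖f‖ + 1)⁻¹ • f.1‖ ≤ 1
      rw [norm_smul, norm_inv, Real.norm_of_nonneg hpos.le, inv_mul_le_iff₀ hpos]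
      change ‖f‖ ≤ _
      linarith)
    rw [map_smul, smul_eq_mul] at h1
    exact (mul_eq_zero.1 h1).resolve_left (inv_ne_zero hpos.ne')
  refine dualBall_ext fun f => ?_
  have h1 := hf0' (f - f.1 a • e) (by
    change f.1 a - f.1 a * e.1 a = 0
    rw [he, ContinuousMap.one_apply]; ring)
  rw [map_sub, map_smul, hze, smul_eq_mul, mul_one, sub_eq_zero] at h1
  rw [h1, evBall_apply]

end Eval

/-! ### Copies of `[0, ω₁]` are excluded -/

section Omega1
variable {L : Type u} [TopologicalSpace L] [CompactSpace L] [T2Space L]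

/-- If `a ≠ b` are isolated points of the closed set `M` that are not isolated in `L`, and `Y`
identifies `a` with `b` but contains the constants and everything vanishing on `M`, then the
evaluation at `a` lies in the set induced by any skeleton of the dual ball. -/
lemma ev_mem_of_closed_pair {Y : Submodule ℝ C(L, ℝ)} (𝔰 : RetractionalSkeleton (dualBall Y))
    {M : Set L} {a b : L} (hM : IsClosed M) (haM : a ∈ M) (hbM : b ∈ M)
    (hne : a ≠ b) (hMa : IsClosed (M \ {a})) (hMb : IsClosed (M \ {b}))
    (ha : (𝓝[≠] a).NeBot) (hb : (𝓝[≠] b).NeBot) (h1 : (1 : C(L, ℝ)) ∈ Y)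
    (hab : ∀ f ∈ Y, f a = f b) (hMY : ∀ f : C(L, ℝ), (∀ x ∈ M, f x = 0) → f ∈ Y) :
    evBall Y a ∈ 𝔰.inducedSet := by
  obtain ⟨v0, hv0, hv1, hv01⟩ := exists_continuous_zero_one_of_isClosed hMa
    (isClosed_singleton (x := a)) (by simp)
  replace hv1 : v0 a = 1 := hv1 rfl
  have hvb : v0 b = 0 := hv0 ⟨hbM, hne.symm⟩
  let v : C(L, ℝ) := ⟨fun x => max 0 (min 1 (3 * v0 x - 1)), by fun_prop⟩
  have hvlow : ∀ x, v0 x ≤ 1 / 3 → v x = 0 := fun x hx => by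
    change max 0 (min 1 (3 * v0 x - 1)) = 0
    exact max_eq_left ((min_le_right _ _).trans (by linarith))
  have hvhigh : ∀ x, 2 / 3 ≤ v0 x → v x = 1 := fun x hx => by
    change max 0 (min 1 (3 * v0 x - 1)) = 1
    rw [min_eq_left (by linarith)]; simp
  -- a bump at a point outside `M` and outside a closed set `C`
  have bump : ∀ (C : Set L), IsClosed C → ∀ x, x ∉ M → x ∉ C → ∃ w : Y, (∀ y, 0 ≤ w.1 y) ∧
      (∀ y, w.1 y ≤ 1) ∧ w.1 x = 1 ∧ ∀ y ∈ C, w.1 y = 0 := by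
    intro C hC x hxM hxC
    obtain ⟨w, hw0, hw1, hw01⟩ := exists_continuous_zero_one_of_isClosed (hM.union hC)
      (isClosed_singleton (x := x)) (by simp [hxM, hxC])
    exact ⟨⟨w, hMY w fun y hy => hw0 (Or.inl hy)⟩, fun y => (hw01 y).1, fun y => (hw01 y).2,
      hw1 rfl, fun y hy => hw0 (Or.inr hy)⟩
  have pick : ∀ c : L, (𝓝[≠] c).NeBot → IsClosed (M \ {c}) → ∀ W ∈ 𝓝 c, ∃ x ∈ W, x ∉ M := by
    intro c hc hMc W hW
    have hU : W ∩ (M \ {c})ᶜ ∈ 𝓝 c := inter_mem hW (hMc.isOpen_compl.mem_nhds (by simp))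
    obtain ⟨x, hx, hxc⟩ := (hc.nonempty_of_mem (inter_mem_nhdsWithin {c}ᶜ hU))
    exact ⟨x, hxc.1, fun hxM => hxc.2 ⟨hxM, hx⟩⟩
  refine ev_mem_of_pair 𝔰 ⟨1, h1⟩ rfl (fun f => hab f.1 f.2) v (fun x => le_max_left _ _)
    (fun x => max_le zero_le_one (min_le_left _ _)) ?_ ?_ ?_
  · intro f hf
    refine hMY _ fun x hx => ?_
    by_cases hxa : x = a
    · simp [hxa, hf]
    · have : v x = 0 := hvlow x (by rw [hv0 ⟨hx, hxa⟩]; norm_num)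
      simp [this]
  · intro W hW
    have hW' : W ∩ {x | 2 / 3 < v0 x} ∈ 𝓝 a := inter_mem hW
      ((isOpen_lt continuous_const v0.continuous).mem_nhds (by simp [hv1]; norm_num))
    obtain ⟨x, ⟨hxW, hxv⟩, hxM⟩ := pick a ha hMa _ hW'
    obtain ⟨w, h0, h1, hx, hC⟩ := bump {x | v0 x ≤ 2 / 3}
      (isClosed_le v0.continuous continuous_const) x hxM (fun h => not_lt.2 (mem_setOf.1 h) (mem_setOf.1 hxv))
    refine ⟨x, hxW, w, h0, h1, hx, fun y => ?_⟩
    rcases le_total (v0 y) (2 / 3) with h | h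
    · rw [hC y h, zero_mul]
    · rw [hvhigh y h, mul_one]
  · intro W hW
    have hW' : W ∩ {x | v0 x < 1 / 3} ∈ 𝓝 b := inter_mem hW
      ((isOpen_lt v0.continuous continuous_const).mem_nhds (by simp [hvb]))
    obtain ⟨x, ⟨hxW, hxv⟩, hxM⟩ := pick b hb hMb _ hW'
    obtain ⟨w, h0, h1, hx, hC⟩ := bump {x | 1 / 3 ≤ v0 x}
      (isClosed_le continuous_const v0.continuous) x hxM (fun h => not_lt.2 (mem_setOf.1 h) (mem_setOf.1 hxv))
    refine ⟨x, hxW, w, h0, h1, hx, fun y => ?_⟩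
    rcases le_total (v0 y) (1 / 3) with h | h
    · rw [hvlow y h, mul_zero]
    · rw [hC y h, zero_mul]

/-! Arithmetic of ordinals below `ω₁`. -/

lemma lt_omega1_iff {α : Ordinal.{0}} : α < omega1 ↔ α.card ≤ Cardinal.aleph0 := by
  rw [omega1, Cardinal.lt_ord, Cardinal.lt_aleph_one_iff]

/-- The ordinal `ω β + n`. -/
noncomputable def ordPt (β : Ordinal.{0}) (n : ℕ) : Ordinal.{0} := Ordinal.omega0 * β + n

lemma ordPt_lt_omega1 {β : Ordinal.{0}} (hβ : β < omega1) (n : ℕ) : ordPt β n < omega1 := by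
  rw [lt_omega1_iff] at *
  simp only [ordPt, Ordinal.card_add, Ordinal.card_mul, Ordinal.card_omega0, Ordinal.card_nat]
  refine Cardinal.add_le_aleph0.2 ⟨?_, Cardinal.natCast_le_aleph0⟩
  calc _ ≤ Cardinal.aleph0 * Cardinal.aleph0 := by gcongr
    _ = _ := Cardinal.aleph0_mul_aleph0

lemma ordPt_lt_ordPt {β γ : Ordinal.{0}} (h : β < γ) (n m : ℕ) : ordPt β n < ordPt γ m := by
  calc Ordinal.omega0 * β + n < Ordinal.omega0 * β + Ordinal.omega0 := by
        gcongr; exact Ordinal.nat_lt_omega0 n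
    _ = Ordinal.omega0 * Order.succ β := (Ordinal.mul_succ _ _).symm
    _ ≤ Ordinal.omega0 * γ := by gcongr; exact Order.succ_le_of_lt h
    _ ≤ _ := le_self_add

lemma ordPt_strictMono (β : Ordinal.{0}) : StrictMono (ordPt β) := by
  intro n m h
  unfold ordPt
  gcongr

lemma ordPt_succ (β : Ordinal.{0}) (n : ℕ) : Order.succ (ordPt β n) = ordPt β (n + 1) := by
  simp [ordPt, add_assoc, ← Ordinal.add_one_eq_succ]

lemma le_ordPt (β : Ordinal.{0}) (n : ℕ) : β ≤ ordPt β n :=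
  (Ordinal.le_mul_right β Ordinal.omega0_pos).trans le_self_add

lemma omega0_lt_omega1 : Ordinal.omega0 < omega1 := by
  rw [lt_omega1_iff]; simp

lemma succ_lt_omega1 {α : Ordinal.{0}} (h : α < omega1) : Order.succ α < omega1 := by
  rw [lt_omega1_iff] at *
  rw [← Ordinal.add_one_eq_succ, Ordinal.card_add]
  exact Cardinal.add_le_aleph0.2 ⟨h, by simp⟩

lemma exists_bound_omega1 {J : Set Ordinal.{0}} (hJ : J.Countable) (h : ∀ β ∈ J, β < omega1) :
    ∃ γ, Ordinal.omega0 < γ ∧ γ < omega1 ∧ ∀ β ∈ J, β < γ := by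
  haveI := hJ.to_subtype
  have h1 : ⨆ b : J, b.1 < omega1 := by
    have := Ordinal.iSup_lt_omega_one (f := fun b : J => b.1) (fun b => by
      simpa [omega1] using h b.1 b.2)
    simpa [omega1] using this
  refine ⟨Order.succ (max Ordinal.omega0 (⨆ b : J, b.1)), ?_, ?_, ?_⟩
  · exact Order.lt_succ_of_le (le_max_left _ _)
  · exact succ_lt_omega1 (max_lt omega0_lt_omega1 h1)
  · intro β hβ
    exact Order.lt_succ_of_le ((le_ciSup (f := fun b : J => b.1)
      (Ordinal.bddAbove_of_small) ⟨β, hβ⟩).trans (le_max_right _ _))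

lemma Iic_diff_ordPt (β : Ordinal.{0}) (hβ : β < omega1) (n : ℕ) :
    Iic omega1 \ {ordPt β (n + 1)} = Icc 0 (ordPt β n) ∪ Icc (ordPt β (n + 2)) omega1 := by
  have h1 := ordPt_succ β n
  have h2 := ordPt_succ β (n + 1)
  have h3 := ordPt_lt_omega1 hβ n
  have h4 := ordPt_strictMono β (Nat.lt_succ_self n)
  have h5 := ordPt_strictMono β (Nat.lt_succ_self (n + 1))
  ext α
  simp only [mem_diff, mem_Iic, mem_singleton_iff, mem_union, mem_Icc, zero_le, true_and]
  constructor
  · rintro ⟨ha, hne⟩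
    rcases lt_or_gt_of_ne hne with h | h
    · left; rw [← h1] at h; exact Order.lt_succ_iff.1 h
    · right; rw [← h2]; exact ⟨Order.succ_le_of_lt h, ha⟩
  · rintro (h | h)
    · exact ⟨h.trans h3.le, (h.trans_lt h4).ne⟩
    · exact ⟨h.2, (h5.trans_le h.1).ne'⟩

lemma exists_countable_preimage {α β : Type*} {g : α → β} {S : Set α} {C : Set β}
    (h : C ⊆ g '' S) (hC : C.Countable) : ∃ J ⊆ S, J.Countable ∧ C ⊆ g '' J := by
  haveI := hC.to_subtype
  choose k hk using fun x : C => h x.2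
  exact ⟨range k, by rintro _ ⟨x, rfl⟩; exact (hk x).1, countable_range k,
    fun x hx => ⟨k ⟨x, hx⟩, mem_range_self _, (hk ⟨x, hx⟩).2⟩⟩

lemma IsOpen.continuous_indicator_singleton {x : L} (hx : IsOpen ({x} : Set L)) :
    ∃ f : C(L, ℝ), f x = 1 ∧ ∀ y ≠ x, f y = 0 := by
  classical
  refine ⟨⟨Set.indicator {x} (fun _ => (1 : ℝ)), ?_⟩, by simp, fun y hy => by simp [hy]⟩
  exact (IsClopen.continuous_indicator ⟨isClosed_singleton, hx⟩ continuous_const)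

/-- A space satisfying the hereditary skeleton condition contains no copy of `[0, ω₁]`. The subspace
`Y` identifies `ω β + 1` with `ω β + 2` whenever both points are non-isolated in `L`, which puts
the evaluation at one of them into the induced set for each `β < ω₁`; it also identifies `ω²`, a
limit of countably many of these points, with `ω₁`. So the evaluation at `ω₁` is in the induced
set, and countable tightness fails there. -/
theorem HeredSkeleton.false_of_omega1 (hL : HeredSkeleton L) (P : Ordinal.{0} → L)
    (hP : Continuous P) (hinj : InjOn P (Iic omega1)) : False := by
  classical
  set N : Set Ordinal.{0} := {β | (𝓝[≠] (P (ordPt β 1))).NeBot ∧ (𝓝[≠] (P (ordPt β 2))).NeBot}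
    with hN
  set M : Set L := P '' Iic omega1 with hMdef
  let Y : Submodule ℝ C(L, ℝ) :=
    { carrier := {f | (∀ β < omega1, β ∈ N → f (P (ordPt β 1)) = f (P (ordPt β 2))) ∧
        f (P (ordPt Ordinal.omega0 0)) = f (P omega1)}
      add_mem' := fun {f g} hf hg => ⟨fun β h h' => by
        simp [hf.1 β h h', hg.1 β h h'], by simp [hf.2, hg.2]⟩
      zero_mem' := by simp
      smul_mem' := fun c f hf => ⟨fun β h h' => by simp [hf.1 β h h'], by simp [hf.2]⟩ }
  have hYmem : ∀ f : C(L, ℝ), f ∈ Y ↔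
      (∀ β < omega1, β ∈ N → f (P (ordPt β 1)) = f (P (ordPt β 2))) ∧
        f (P (ordPt Ordinal.omega0 0)) = f (P omega1) := fun f => Iff.rfl
  have hYcl : IsClosed (Y : Set C(L, ℝ)) := by
    have : (Y : Set C(L, ℝ)) = (⋂ β : Ordinal.{0}, ⋂ _ : β < omega1, ⋂ _ : β ∈ N,
        {f | f (P (ordPt β 1)) = f (P (ordPt β 2))}) ∩
        {f | f (P (ordPt Ordinal.omega0 0)) = f (P omega1)} := by
      ext f; simp only [SetLike.mem_coe, hYmem, mem_inter_iff, mem_iInter, mem_setOf_eq]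
    rw [this]
    refine IsClosed.inter (isClosed_iInter fun β => isClosed_iInter fun _ =>
      isClosed_iInter fun _ => isClosed_eq ?_ ?_) (isClosed_eq ?_ ?_) <;> fun_prop
  obtain ⟨𝔰⟩ := hL Y hYcl
  have hord : ∀ β < omega1, ∀ n, ordPt β n ∈ Iic omega1 := fun β h n => (ordPt_lt_omega1 h n).le
  have hω : ordPt Ordinal.omega0 0 ∈ Iic omega1 := hord _ omega0_lt_omega1 0
  have hMY : ∀ f : C(L, ℝ), (∀ x ∈ M, f x = 0) → f ∈ Y := by
    intro f hf
    refine (hYmem f).2 ⟨fun β h _ => ?_, ?_⟩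
    · rw [hf _ ⟨_, hord β h 1, rfl⟩, hf _ ⟨_, hord β h 2, rfl⟩]
    · rw [hf _ ⟨_, hω, rfl⟩, hf _ ⟨_, self_mem_Iic, rfl⟩]
  have hIcc : ∀ α β, IsClosed (P '' Icc α β) := fun α β => (isCompact_Icc.image hP).isClosed
  have hMcl : IsClosed M := by
    have : Iic omega1 = Icc 0 omega1 := by ext; simp
    rw [hMdef, this]; exact hIcc _ _
  have hMd : ∀ β < omega1, ∀ n, IsClosed (M \ {P (ordPt β (n + 1))}) := by
    intro β h n
    have : M \ {P (ordPt β (n + 1))} = P '' (Iic omega1 \ {ordPt β (n + 1)}) := by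
      rw [hinj.image_diff, inter_eq_right.2 (by simpa using hord β h (n + 1)), image_singleton]
    rw [this, Iic_diff_ordPt β h n, image_union]
    exact (hIcc _ _).union (hIcc _ _)
  -- one point of each pair has its evaluation in the induced set
  have hc : ∀ β < omega1, ∃ c, (c = ordPt β 1 ∨ c = ordPt β 2) ∧
      evBall Y (P c) ∈ 𝔰.inducedSet := by
    intro β hβ
    have isol : β ∉ N → ∀ n, 0 < n → ¬ (𝓝[≠] (P (ordPt β n))).NeBot →
        evBall Y (P (ordPt β n)) ∈ 𝔰.inducedSet := by
      intro hβN n hn h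
      obtain ⟨f, hf1, hf0⟩ := IsOpen.continuous_indicator_singleton
        (x := P (ordPt β n)) (by
          rw [isOpen_singleton_iff_punctured_nhds]; exact not_neBot.1 h)
      have hz : ∀ α ∈ Iic omega1, α ≠ ordPt β n → f (P α) = 0 := fun α hα hne =>
        hf0 _ fun h => hne (hinj hα (hord β hβ n) h)
      have hne : ∀ β', β' ≠ β → ∀ m, ordPt β' m ≠ ordPt β n := by
        intro β' h' m
        rcases lt_or_gt_of_ne h' with h' | h'
        · exact (ordPt_lt_ordPt h' _ _).ne
        · exact (ordPt_lt_ordPt h' _ _).ne'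
      have hfY : f ∈ Y := by
        refine (hYmem f).2 ⟨fun β' h' hN' => ?_, ?_⟩
        · have : β' ≠ β := fun h => hβN (h ▸ hN')
          rw [hz _ (hord β' h' 1) (hne β' this 1), hz _ (hord β' h' 2) (hne β' this 2)]
        · rw [hz _ hω, hz _ self_mem_Iic (ordPt_lt_omega1 hβ n).ne']
          by_cases hβω : Ordinal.omega0 = β
          · rw [hβω]; exact (ordPt_strictMono β hn).ne
          · exact hne _ hβω 0
      refine ev_mem_of_peak 𝔰 _ ⟨f, hfY⟩ hf1 fun y hy => ?_
      simp [hf0 y hy]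
    by_cases hβN : β ∈ N
    · refine ⟨_, Or.inl rfl, ev_mem_of_closed_pair 𝔰 hMcl ⟨_, hord β hβ 1, rfl⟩
        ⟨_, hord β hβ 2, rfl⟩ ?_ (hMd β hβ 0) (hMd β hβ 1) hβN.1 hβN.2 ?_ ?_ hMY⟩
      · exact fun h => (ordPt_strictMono β one_lt_two).ne (hinj (hord β hβ 1) (hord β hβ 2) h)
      · exact (hYmem _).2 ⟨fun _ _ _ => rfl, rfl⟩
      · exact fun f hf => ((hYmem f).1 hf).1 β hβ hβN
    · rcases not_and_or.1 hβN with h | h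
      · exact ⟨_, Or.inl rfl, isol hβN 1 one_pos h⟩
      · exact ⟨_, Or.inr rfl, isol hβN 2 two_pos h⟩
  choose! c hc12 hcD using hc
  have hc_ge : ∀ β < omega1, β ≤ c β := fun β hβ => by
    rcases hc12 β hβ with h | h <;> rw [h] <;> exact le_ordPt _ _
  have hc_lt : ∀ β γ n, β < omega1 → β < γ → c β < ordPt γ n := fun β γ n hβ h => by
    rcases hc12 β hβ with h' | h' <;> rw [h'] <;> exact ordPt_lt_ordPt h _ _
  have hc_gt : ∀ β < omega1, ordPt β 0 < c β := fun β hβ => by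
    rcases hc12 β hβ with h' | h' <;> rw [h'] <;> exact ordPt_strictMono β (by norm_num)
  have hev : Continuous fun α => evBall Y (P α) := (evBall_continuous Y).comp hP
  have heq : evBall Y (P (ordPt Ordinal.omega0 0)) = evBall Y (P omega1) :=
    dualBall_ext fun f => ((hYmem f.1).1 f.2).2
  -- `P (ω²)` is a limit of countably many points of the induced set
  have hωD : evBall Y (P omega1) ∈ 𝔰.inducedSet := by
    rw [← heq]
    have hlub : IsLUB (c '' range ((↑) : ℕ → Ordinal.{0})) (ordPt Ordinal.omega0 0) := by
      constructor
      · rintro _ ⟨_, ⟨n, rfl⟩, rfl⟩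
        exact (hc_lt _ _ _ ((Ordinal.nat_lt_omega0 n).trans omega0_lt_omega1)
          (Ordinal.nat_lt_omega0 n)).le
      · intro α hα
        by_contra hlt
        rw [not_le, ordPt, Nat.cast_zero, add_zero,
          Ordinal.lt_mul_iff_of_isSuccLimit Ordinal.isSuccLimit_omega0] at hlt
        obtain ⟨β, hβ, hαβ⟩ := hlt
        obtain ⟨n, rfl⟩ := Ordinal.lt_omega0.1 hβ
        have h1 := hα ⟨n, ⟨n, rfl⟩, rfl⟩
        have h2 := hc_gt n (hβ.trans omega0_lt_omega1)
        rw [ordPt, Nat.cast_zero, add_zero] at h2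
        exact absurd (hαβ.trans h2) (not_lt.2 h1)
    have hcl := image_closure_subset_closure_image hev
      (mem_image_of_mem _ (hlub.mem_closure ((range_nonempty _).image _)))
    refine 𝔰.closure_countable (((countable_range _).image _).image _) ?_ hcl
    rintro _ ⟨_, ⟨_, ⟨n, rfl⟩, rfl⟩, rfl⟩
    exact hcD _ ((Ordinal.nat_lt_omega0 n).trans omega0_lt_omega1)
  have hcl : evBall Y (P omega1) ∈
      closure ((fun β => evBall Y (P (c β))) '' Ioo Ordinal.omega0 omega1) := by
    have hlub : IsLUB (c '' Ioo Ordinal.omega0 omega1) omega1 := by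
      constructor
      · rintro _ ⟨β, hβ, rfl⟩
        rcases hc12 β hβ.2 with h | h <;> rw [h] <;> exact (ordPt_lt_omega1 hβ.2 _).le
      · intro α hα
        by_contra hlt
        rw [not_le] at hlt
        have hm : Order.succ (max Ordinal.omega0 α) < omega1 :=
          succ_lt_omega1 (max_lt omega0_lt_omega1 hlt)
        have h1 := hα ⟨_, ⟨Order.lt_succ_of_le (le_max_left _ _), hm⟩, rfl⟩
        have h2 := hc_ge _ hm
        have h3 : α < Order.succ (max Ordinal.omega0 α) := Order.lt_succ_of_le (le_max_right _ _)
        exact absurd (h3.trans_le h2) (not_lt.2 h1)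
    have := image_closure_subset_closure_image hev
      (mem_image_of_mem _ (hlub.mem_closure
        (Set.Nonempty.image _ ⟨_, Order.lt_succ _, succ_lt_omega1 omega0_lt_omega1⟩)))
    rwa [image_image] at this
  obtain ⟨C, hCA, hCc, hClC⟩ := 𝔰.tight (by
    rintro _ ⟨β, hβ, rfl⟩; exact hcD β hβ.2) hωD hcl
  obtain ⟨J, hJS, hJ, hCJ⟩ := exists_countable_preimage hCA hCc
  obtain ⟨γ, hωγ, hγ, hJγ⟩ := exists_bound_omega1 hJ fun β hβ => (hJS hβ).2
  -- a function in `Y` separating `P ω₁` from the chosen countable set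
  have hdisj : Disjoint (P '' Icc (ordPt Ordinal.omega0 1) (ordPt γ 0))
      (P '' Icc 0 (ordPt Ordinal.omega0 0) ∪ P '' Icc (ordPt γ 1) omega1) := by
    rw [← image_union, disjoint_left]
    rintro _ ⟨α, hα, rfl⟩ ⟨α', hα', hαα⟩
    have hγ0 := hord γ hγ 0
    have : α' = α := by
      refine hinj ?_ (hα.2.trans hγ0) hαα
      rcases hα' with h | h
      · exact h.2.trans hω
      · exact h.2
    subst this
    rcases hα' with h | h
    · exact absurd (hα.1.trans h.2) (not_le.2 (ordPt_strictMono _ one_pos))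
    · exact absurd (h.1.trans hα.2) (not_le.2 (ordPt_strictMono _ one_pos))
  obtain ⟨f, hf0, hf1, -⟩ := exists_continuous_zero_one_of_isClosed (hIcc _ _)
    ((hIcc _ _).union (hIcc _ _)) hdisj
  have hfω1 : f (P omega1) = 1 := hf1 (Or.inr ⟨_, ⟨ordPt_lt_omega1 hγ 1 |>.le, le_rfl⟩, rfl⟩)
  have hfY : f ∈ Y := by
    refine (hYmem f).2 ⟨fun β h _ => ?_, ?_⟩
    · have key : ∀ n, 0 < n → f (P (ordPt β n)) =
          if Ordinal.omega0 ≤ β ∧ β < γ then 0 else 1 := by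
        intro n hn
        split_ifs with hβ
        · refine hf0 ⟨_, ⟨?_, (ordPt_lt_ordPt hβ.2 _ _).le⟩, rfl⟩
          rcases hβ.1.eq_or_lt with h' | h'
          · rw [h']; exact (ordPt_strictMono β).monotone hn
          · exact (ordPt_lt_ordPt h' _ _).le
        · rw [not_and_or, not_le, not_lt] at hβ
          rcases hβ with h' | h'
          · exact hf1 (Or.inl ⟨_, ⟨zero_le, (ordPt_lt_ordPt h' _ _).le⟩, rfl⟩)
          · refine hf1 (Or.inr ⟨_, ⟨?_, hord β h n⟩, rfl⟩)
            rcases h'.eq_or_lt with h' | h'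
            · rw [h']; exact (ordPt_strictMono β).monotone hn
            · exact (ordPt_lt_ordPt h' _ _).le
      rw [key 1 one_pos, key 2 two_pos]
    · rw [hfω1]; exact hf1 (Or.inl ⟨_, ⟨zero_le, le_rfl⟩, rfl⟩)
  have hsub : C ⊆ {z | z.1 ⟨f, hfY⟩ = 0} := by
    intro z hz
    obtain ⟨β, hβ, rfl⟩ := hCJ hz
    refine hf0 ⟨_, ⟨?_, ?_⟩, rfl⟩
    · rcases hc12 β (hJS hβ).2 with h | h <;> rw [h] <;> exact (ordPt_lt_ordPt (hJS hβ).1 _ _).le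
    · exact (hc_lt β γ 0 (hJS hβ).2 (hJγ β hβ)).le
  have := closure_minimal hsub (isClosed_eq (dualBall_eval_continuous _) continuous_const) hClC
  have h0 : f (P omega1) = 0 := this
  rw [hfω1] at h0
  exact one_ne_zero h0

/-- Version for an embedding of the ordinal segment itself. -/
theorem HeredSkeleton.false_of_embedding (hL : HeredSkeleton L) (φ : OrdinalSegmentOmega1 → L)
    (hφ : IsEmbedding φ) : False := by
  refine hL.false_of_omega1 (fun α => φ ⟨min α omega1, mem_Iic.2 (min_le_right _ _)⟩)
    (hφ.continuous.comp (Continuous.subtype_mk (by fun_prop) _)) ?_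
  intro α hα β hβ h
  have := congrArg Subtype.val (hφ.injective h)
  simpa [min_eq_left (mem_Iic.1 hα), min_eq_left (mem_Iic.1 hβ)] using this

end Omega1

/-! ### Density of `Gδ` points and the Corson property -/

section CorsonPart
variable {K : Type u} [TopologicalSpace K] [CompactSpace K] [T2Space K]

/-- The `Gδ` points of `K`: all `x` such that `{x}` is a `Gδ` set. -/
def gdeltaPts (K : Type u) [TopologicalSpace K] : Set K := {x | IsGδ ({x} : Set K)}

/-- The quotient map collapsing the complement of an open set to the point at infinity. -/
lemma exists_collapse {U : Set K} (hU : IsOpen U) (hne : Uᶜ.Nonempty) :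
    ∃ π : C(K, OnePoint U), Function.Surjective π := by
  classical
  let π : K → OnePoint U := fun x => if h : x ∈ U then ((⟨x, h⟩ : U) : OnePoint U) else OnePoint.infty
  have hπU : ∀ x : U, π x = (x : OnePoint U) := fun x => dif_pos x.2
  have hpre : ∀ s : Set (OnePoint U), OnePoint.infty ∉ s →
      π ⁻¹' s = Subtype.val '' (((↑) : U → OnePoint U) ⁻¹' s) := by
    intro s hs
    ext x
    by_cases hx : x ∈ U
    · simp [π, hx]
    · simp [π, hx, hs]
  have hcont : Continuous π := by
    refine ⟨fun s hs => ?_⟩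
    by_cases hi : OnePoint.infty ∈ s
    · have h1 : IsCompact (((↑) : U → OnePoint U) ⁻¹' sᶜ) :=
        ((OnePoint.isClosed_iff_of_notMem (s := sᶜ) (by simpa using hi)).1 hs.isClosed_compl).2
      have h2 := hpre sᶜ (by simpa using hi)
      rw [← isClosed_compl_iff, ← preimage_compl, h2]
      exact (h1.image continuous_subtype_val).isClosed
    · rw [hpre s hi]
      exact hU.isOpenMap_subtype_val _ (hs.preimage OnePoint.continuous_coe)
  refine ⟨⟨π, hcont⟩, fun y => ?_⟩
  induction y using OnePoint.rec with
  | infty =>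
    obtain ⟨x, hx⟩ := hne
    exact ⟨x, dif_neg hx⟩
  | coe x => exact ⟨x, hπU x⟩

/-- An open set without `Gδ` points, with one point removed, is a proper open subset; its one-point
compactification is a continuous image of `K` and contains no copy of `[0, ω₁]`. -/
lemma dense_gdeltaPts (hK : InClassG0 K) (hH : HeredSkeleton K) : Dense (gdeltaPts K) := by
  rw [dense_iff_closure_eq]
  by_contra hne
  have hUne : (closure (gdeltaPts K))ᶜ.Nonempty := nonempty_compl.2 hne
  have hUo : IsOpen (closure (gdeltaPts K))ᶜ := isClosed_closure.isOpen_compl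
  obtain ⟨p, hp⟩ := hUne
  have hno : ∀ x ∈ (closure (gdeltaPts K))ᶜ, ¬ IsGδ ({x} : Set K) :=
    fun x hx h => hx (subset_closure h)
  have hne' : ((closure (gdeltaPts K))ᶜ \ {p}).Nonempty := by
    by_contra he
    rw [not_nonempty_iff_eq_empty, diff_eq_empty] at he
    have : (closure (gdeltaPts K))ᶜ = {p} := he.antisymm (by simpa using hp)
    rw [this] at hUo
    exact hno p hp hUo.isGδ
  have hU'o := hUo.sdiff (isClosed_singleton (x := p))
  obtain ⟨φ, hφ⟩ := hK _ hU'o hne' fun x hx => hno x hx.1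
  haveI : LocallyCompactSpace ↥((closure (gdeltaPts K))ᶜ \ {p}) := hU'o.locallyCompactSpace
  obtain ⟨π, hπ⟩ := exists_collapse hU'o ⟨p, by simp⟩
  exact (hH.of_surjective π hπ).false_of_embedding φ hφ

/-- A finite set of `Gδ` points is a zero set. -/
lemma exists_zero_fun {F : Set K} (hF : F.Finite) (hFG : F ⊆ gdeltaPts K) :
    ∃ p : C(K, ℝ), (∀ x, 0 ≤ p x) ∧ (∀ x, p x ≤ 1) ∧ ∀ x, p x = 0 ↔ x ∈ F := by
  have hGδ : IsGδ F := by
    rw [← biUnion_of_singleton F]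
    exact IsGδ.biUnion hF fun x hx => hFG hx
  obtain ⟨f, hf, -, -, h01⟩ := exists_continuous_one_zero_of_isCompact_of_isGδ hF.isCompact hGδ
    isClosed_empty (by simp)
  refine ⟨1 - f, fun x => by simpa using (h01 x).2, fun x => by simpa using (h01 x).1,
    fun x => ?_⟩
  rw [show x ∈ F ↔ x ∈ f ⁻¹' {1} from by rw [← hf]]
  simp only [ContinuousMap.sub_apply, ContinuousMap.one_apply, mem_preimage, mem_singleton_iff,
    sub_eq_zero]
  exact eq_comm

/-- Every point `x` is in the closure of countably many `Gδ` points. For `b` an accumulation point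
of countably many `Gδ` points, consider the skeleton of the dual ball of `{f | f x = f b}`: the
evaluation at `x`, being that at `b`, lies in the induced set, which is countably tight. -/
lemma exists_countable_gdelta (hH : HeredSkeleton K) (hG : Dense (gdeltaPts K)) (x : K) :
    ∃ C ⊆ gdeltaPts K, C.Countable ∧ x ∈ closure C := by
  by_cases hxG : x ∈ gdeltaPts K
  · exact ⟨{x}, by simpa using hxG, countable_singleton x, subset_closure rfl⟩
  have hinf : (gdeltaPts K).Infinite := by
    intro hfin
    have := hG.closure_eq
    rw [hfin.isClosed.closure_eq] at this
    exact hxG (this ▸ mem_univ x)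
  obtain ⟨E, hEG, hEinf, hEc⟩ : ∃ E ⊆ gdeltaPts K, E.Infinite ∧ E.Countable := by
    refine ⟨range fun n => (hinf.natEmbedding _ n).1, ?_, ?_, countable_range _⟩
    · rintro _ ⟨n, rfl⟩; exact (hinf.natEmbedding _ n).2
    · exact infinite_range_of_injective
        (Subtype.val_injective.comp (hinf.natEmbedding (gdeltaPts K)).injective)
  obtain ⟨b, hb⟩ := hEinf.exists_accPt_principal
  rw [accPt_principal_iff_clusterPt, ← mem_closure_iff_clusterPt] at hb
  by_cases hxb : x = b
  · subst hxb
    exact ⟨E, hEG, hEc, closure_mono diff_subset hb⟩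
  let Y : Submodule ℝ C(K, ℝ) :=
    { carrier := {f | f x = f b}
      add_mem' := fun {f g} hf hg => by simp_all
      zero_mem' := by simp
      smul_mem' := fun c f hf => by simp_all }
  have hYcl : IsClosed (Y : Set C(K, ℝ)) := isClosed_eq (f := fun f : C(K, ℝ) => f x)
    (g := fun f => f b) (by fun_prop) (by fun_prop)
  obtain ⟨𝔰⟩ := hH Y hYcl
  have hpt : ∀ y ∈ gdeltaPts K, y ≠ b → evBall Y y ∈ 𝔰.inducedSet := by
    intro y hy hyb
    obtain ⟨p, hp0, hp1, hpz⟩ := exists_zero_fun (finite_singleton y) (by simpa using hy)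
    have hxp : 0 < p x := (hp0 x).lt_of_ne' fun h => hxG ((hpz x).1 h ▸ hy)
    have hbp : 0 < p b := (hp0 b).lt_of_ne' fun h => hyb ((hpz b).1 h).symm
    let f : C(K, ℝ) := ⟨fun z => 1 - min (p z) (min (p x) (p b)), by fun_prop⟩
    have hfY : f ∈ Y := by
      change 1 - min (p x) (min (p x) (p b)) = 1 - min (p b) (min (p x) (p b))
      simp
    refine ev_mem_of_peak 𝔰 y ⟨f, hfY⟩ ?_ fun z hz => ?_
    · change 1 - min (p y) (min (p x) (p b)) = 1
      rw [(hpz y).2 rfl, min_eq_left (le_min hxp.le hbp.le), sub_zero]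
    · change |1 - min (p z) (min (p x) (p b))| < 1
      have hz0 : 0 < p z := (hp0 z).lt_of_ne' fun h => hz ((hpz z).1 h)
      have h1 : 0 < min (p z) (min (p x) (p b)) := lt_min hz0 (lt_min hxp hbp)
      have h2 : min (p z) (min (p x) (p b)) ≤ 1 := (min_le_left _ _).trans (hp1 z)
      rw [abs_lt]; constructor <;> linarith
  have hxb' : evBall Y x = evBall Y b := dualBall_ext fun f => f.2
  have hxD : evBall Y x ∈ 𝔰.inducedSet := by
    rw [hxb']
    refine 𝔰.closure_countable ((hEc.mono diff_subset).image _) ?_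
      (image_closure_subset_closure_image (evBall_continuous Y) (mem_image_of_mem _ hb))
    rintro _ ⟨y, hy, rfl⟩
    exact hpt y (hEG hy.1) hy.2
  obtain ⟨U, V, hU, hV, hxU, hbV, hUV⟩ := t2_separation hxb
  have hbU : b ∉ closure U := fun h => (hUV.closure_left hV).le_bot ⟨h, hbV⟩
  have hxcl : evBall Y x ∈ closure (evBall Y '' (U ∩ gdeltaPts K)) :=
    image_closure_subset_closure_image (evBall_continuous Y)
      (mem_image_of_mem _ (hG.open_subset_closure_inter hU hxU))
  obtain ⟨C, hCA, hCc, hClC⟩ := 𝔰.tight (by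
    rintro _ ⟨y, hy, rfl⟩
    exact hpt y hy.2 fun h => hbU (subset_closure (h ▸ hy.1))) hxD hxcl
  obtain ⟨J, hJS, hJ, hCJ⟩ := exists_countable_preimage hCA hCc
  refine ⟨J, fun y hy => (hJS hy).2, hJ, ?_⟩
  by_contra hxJ
  have hbJ : b ∉ closure J := fun h => hbU (closure_mono (fun y hy => (hJS hy).1) h)
  obtain ⟨f, hf0, hf1, -⟩ := exists_continuous_zero_one_of_isClosed (isClosed_closure (s := J))
    ((toFinite {x, b}).isClosed) (by simp [hxJ, hbJ])
  have hfx : f x = 1 := hf1 (by simp)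
  have hfb : f b = 1 := hf1 (by simp)
  have hfY : f ∈ Y := hfx.trans hfb.symm
  have hsub : C ⊆ {z | z.1 ⟨f, hfY⟩ = 0} := by
    intro z hz
    obtain ⟨y, hy, rfl⟩ := hCJ hz
    exact hf0 (subset_closure hy)
  have := closure_minimal hsub (isClosed_eq (dualBall_eval_continuous _) continuous_const) hClC
  have h0 : f x = 0 := this
  rw [hfx] at h0
  exact one_ne_zero h0

/-- Under the hereditary skeleton condition and density of `Gδ` points, `K` carries (up to
homeomorphism) a full retractional skeleton. -/
lemma exists_full_skeleton (hH : HeredSkeleton K) (hG : Dense (gdeltaPts K)) :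
    ∃ (X : Type u) (_ : TopologicalSpace X) (_ : CompactSpace X) (_ : T2Space X)
      (_ : K ≃ₜ X) (𝔱 : RetractionalSkeleton X), 𝔱.inducedSet = univ := by
  obtain ⟨𝔰⟩ := hH ⊤ isClosed_univ
  have hpt : ∀ y ∈ gdeltaPts K, evBall ⊤ y ∈ 𝔰.inducedSet := by
    intro y hy
    obtain ⟨p, hp0, hp1, hpz⟩ := exists_zero_fun (finite_singleton y) (by simpa using hy)
    refine ev_mem_of_peak 𝔰 y ⟨1 - p, trivial⟩ ?_ fun z hz => ?_
    · simp [(hpz y).2 rfl]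
    · have hz0 : 0 < p z := (hp0 z).lt_of_ne' fun h => hz ((hpz z).1 h)
      have := hp1 z
      simp only [ContinuousMap.sub_apply, ContinuousMap.one_apply]
      rw [abs_lt]; constructor <;> linarith
  have hall : range (evBall (⊤ : Submodule ℝ C(K, ℝ))) ⊆ 𝔰.inducedSet := by
    rintro _ ⟨x, rfl⟩
    obtain ⟨C, hCG, hC, hx⟩ := exists_countable_gdelta hH hG x
    refine 𝔰.closure_countable (hC.image _) ?_
      (image_closure_subset_closure_image (evBall_continuous ⊤) (mem_image_of_mem _ hx))
    rintro _ ⟨y, hy, rfl⟩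
    exact hpt y (hCG hy)
  have hinj : Function.Injective (evBall (⊤ : Submodule ℝ C(K, ℝ))) := by
    intro x y hxy
    by_contra hne
    obtain ⟨f, hf0, hf1, -⟩ := exists_continuous_zero_one_of_isClosed
      (isClosed_singleton (x := x)) (isClosed_singleton (x := y)) (by simpa using hne)
    have := congrArg (fun z => z.1 (⟨f, trivial⟩ : (⊤ : Submodule ℝ C(K, ℝ)))) hxy
    have h' : f x = f y := this
    rw [hf0 rfl, hf1 rfl] at h'
    exact zero_ne_one h'
  have hemb := (evBall_continuous (⊤ : Submodule ℝ C(K, ℝ))).isClosedEmbedding hinj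
  obtain ⟨𝔱, h𝔱⟩ := 𝔰.exists_restrict hemb.isClosed_range hall
  exact ⟨_, inferInstance, isCompact_iff_compactSpace.1 hemb.isClosed_range.isCompact,
    inferInstance, hemb.isEmbedding.toHomeomorph, 𝔱, h𝔱⟩

lemma isCorsonCompact_of_hered (hH : HeredSkeleton K) (hG : Dense (gdeltaPts K)) :
    IsCorsonCompact K := by
  obtain ⟨X, _, _, _, h, 𝔱, h𝔱⟩ := exists_full_skeleton hH hG
  obtain ⟨Γ, A, hA, hc, ⟨h'⟩⟩ := 𝔱.isCorsonCompact_of_full h𝔱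
  exact ⟨Γ, A, hA, hc, ⟨h.trans h'⟩⟩

lemma tight_of_hered (hH : HeredSkeleton K) (hG : Dense (gdeltaPts K)) {A : Set K} {x : K}
    (hx : x ∈ closure A) : ∃ C ⊆ A, C.Countable ∧ x ∈ closure C := by
  obtain ⟨X, _, _, _, h, 𝔱, h𝔱⟩ := exists_full_skeleton hH hG
  obtain ⟨C, hCA, hC, hxC⟩ := 𝔱.tight (A := h '' A) (x := h x) (by simp [h𝔱]) (by simp [h𝔱])
    (by rw [← h.image_closure]; exact mem_image_of_mem _ hx)
  obtain ⟨J, hJA, hJ, hCJ⟩ := exists_countable_preimage hCA hC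
  refine ⟨J, hJA, hJ, ?_⟩
  have := closure_mono hCJ hxC
  rw [← h.image_closure] at this
  exact (h.injective.mem_set_image).1 this

end CorsonPart

/-! ### Property (M) from hereditary skeletons -/

section PropertyM
variable {K : Type u} [TopologicalSpace K] [CompactSpace K] [T2Space K]

/-- A normalised positive functional is approximated, on finitely many functions, by convex
combinations of evaluations at points of a dense set. -/
lemma exists_comb_approx (φ : C(K, ℝ) →ₗ[ℝ] ℝ) (hpos : ∀ f : C(K, ℝ), (∀ x, 0 ≤ f x) → 0 ≤ φ f)
    (h1 : φ 1 = 1) {D : Set K} (hD : Dense D) {ι : Type*} [Fintype ι] (f : ι → C(K, ℝ))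
    {ε : ℝ} (hε : 0 < ε) :
    ∃ (F : Finset K) (c : K → ℝ), ↑F ⊆ D ∧ (∀ x ∈ F, 0 ≤ c x) ∧ ∑ x ∈ F, c x = 1 ∧
      ∀ i, |∑ x ∈ F, c x * f i x - φ (f i)| < ε := by
  classical
  let T : K → ι → ℝ := fun x i => f i x
  have hmem : (fun i => φ (f i)) ∈ closure (convexHull ℝ (T '' D)) := by
    by_contra hnot
    obtain ⟨ℓ, u, hℓ, hu⟩ := geometric_hahn_banach_closed_point
      (convex_convexHull ℝ (T '' D)).closure isClosed_closure hnot
    have hsum : ∀ v : ι → ℝ, ℓ v = ∑ i, v i * ℓ (Pi.single i 1) := by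
      intro v
      conv_lhs => rw [pi_eq_sum_univ' v, map_sum]
      simp only [map_smul, smul_eq_mul]
    have hle : ∀ x, (∑ i, ℓ (Pi.single i 1) • f i) x ≤ u := by
      have hcl : IsClosed {x | (∑ i, ℓ (Pi.single i 1) • f i) x ≤ u} :=
        isClosed_le (ContinuousMap.continuous _) continuous_const
      have hDs : D ⊆ {x | (∑ i, ℓ (Pi.single i 1) • f i) x ≤ u} := by
        intro x hx
        have := (hℓ (T x) (subset_closure (subset_convexHull ℝ _ ⟨x, hx, rfl⟩))).le
        rw [hsum] at this
        simpa [T, ContinuousMap.sum_apply, mul_comm] using this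
      intro x
      exact closure_minimal hDs hcl (hD x)
    have := hpos (u • 1 - ∑ i, ℓ (Pi.single i 1) • f i) fun x => by simpa using hle x
    rw [hsum] at hu
    simp only [map_sub, map_smul, h1, map_sum, smul_eq_mul, mul_one] at this
    simp only [mul_comm] at hu this
    linarith
  obtain ⟨v, hv, hvε⟩ := Metric.mem_closure_iff.1 hmem ε hε
  rw [convexHull_eq] at hv
  obtain ⟨κ, t, w, z, hw0, hw1, hz, hcm⟩ := hv
  haveI : Nonempty K := by
    obtain ⟨i, hi, -⟩ := Finset.exists_ne_zero_of_sum_ne_zero (hw1.trans_ne one_ne_zero)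
    exact ⟨(hz i hi).choose⟩
  choose! y hyD hyz using hz
  have hagg : ∀ g : K → ℝ, ∑ x ∈ t.image y, (∑ i ∈ t with y i = x, w i) * g x =
      ∑ i ∈ t, w i * g (y i) := by
    intro g
    rw [← Finset.sum_fiberwise_of_maps_to (s := t) (t := t.image y) (g := y)
      (fun i hi => Finset.mem_image_of_mem y hi)]
    refine Finset.sum_congr rfl fun x _ => ?_
    rw [Finset.sum_mul]
    refine Finset.sum_congr rfl fun i hi => ?_
    rw [(Finset.mem_filter.1 hi).2]
  refine ⟨t.image y, fun x => ∑ i ∈ t with y i = x, w i, ?_, ?_, ?_, ?_⟩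
  · intro x hx
    obtain ⟨i, hi, rfl⟩ := Finset.mem_image.1 (Finset.mem_coe.1 hx)
    exact hyD i hi
  · exact fun x _ => Finset.sum_nonneg fun i hi => hw0 i (Finset.mem_filter.1 hi).1
  · have := hagg fun _ => 1
    simpa [hw1] using this
  · intro i
    rw [hagg, abs_sub_comm, ← Real.dist_eq]
    have hvi : v i = ∑ j ∈ t, w j * f i (y j) := by
      rw [← hcm, Finset.centerMass_eq_of_sum_1 _ _ hw1, Finset.sum_apply]
      refine Finset.sum_congr rfl fun j hj => ?_
      rw [← hyz j hj]; rfl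
    rw [← hvi]
    exact (dist_le_pi_dist _ _ i).trans_lt hvε

lemma abs_le_of_positive {φ : C(K, ℝ) →ₗ[ℝ] ℝ}
    (hpos : ∀ f : C(K, ℝ), (∀ x, 0 ≤ f x) → 0 ≤ φ f) (h1 : φ 1 = 1) (f : C(K, ℝ)) :
    |φ f| ≤ ‖f‖ := by
  have ha := hpos (‖f‖ • 1 - f) fun x => by
    simpa using (le_abs_self _).trans (f.norm_coe_le_norm x)
  have hb := hpos (‖f‖ • 1 + f) fun x => by
    have := (neg_le_abs _).trans (f.norm_coe_le_norm x)
    simp; linarith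
  simp [h1] at ha hb
  rw [abs_le]; constructor <;> linarith

/-- The core of the argument for property (M), phrased for a positive functional `φ` and a set
`S` on which `φ` is strictly positive (its support). The hyperplane `Y = {f : φ f = f x₀}`
identifies `φ` with the evaluation at `x₀`. The latter lies in the induced set and is a limit of
convex combinations of evaluations at `Gδ` points whose value at `b` is at most `1 - d / 2`. By
tightness countably many of these suffice; their supports form a countable set, and if `S` were not
separable, a function of `Y` correcting `b` off this set would yield a contradiction. -/
theorem isSeparable_of_hered (hH : HeredSkeleton K) (hG : Dense (gdeltaPts K))
    (φ : C(K, ℝ) →ₗ[ℝ] ℝ) (hpos : ∀ f : C(K, ℝ), (∀ x, 0 ≤ f x) → 0 ≤ φ f) (h1 : φ 1 = 1)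
    {S : Set K} (hS : ∀ f : C(K, ℝ), (∀ x, 0 ≤ f x) → ∀ z ∈ S, 0 < f z → 0 < φ f) :
    IsSeparable S := by
  classical
  by_contra hnsep
  have hex : ∀ E : Set K, E.Countable → ∃ z ∈ S, z ∉ closure E := by
    intro E hE
    by_contra hcon
    push Not at hcon
    exact hnsep ⟨E, hE, hcon⟩
  have hSinf : (univ : Set K).Infinite := fun hfin => by
    obtain ⟨z, -, hz⟩ := hex univ hfin.countable
    exact hz (subset_closure (mem_univ z))
  obtain ⟨x₀, hx₀⟩ := hSinf.exists_accPt_principal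
  haveI hx₀ne : (𝓝[≠] x₀).NeBot := by
    simpa [AccPt] using hx₀
  have hG' : Dense (gdeltaPts K \ {x₀}) := hG.diff_singleton x₀
  have hcφ : Continuous φ :=
    (φ.mkContinuous 1 fun f => by simpa using abs_le_of_positive hpos h1 f).continuous
  let Y : Submodule ℝ C(K, ℝ) :=
    { carrier := {f | φ f = f x₀}
      add_mem' := fun {f g} hf hg => by simp_all
      zero_mem' := by simp
      smul_mem' := fun c f hf => by simp_all }
  have hYmem : ∀ f, f ∈ Y ↔ φ f = f x₀ := fun f => Iff.rfl
  have hYcl : IsClosed (Y : Set C(K, ℝ)) := isClosed_eq (f := fun f : C(K, ℝ) => φ f)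
    (g := fun f => f x₀) hcφ (by fun_prop)
  obtain ⟨𝔰⟩ := hH Y hYcl
  -- bumps at points of the support
  have bump : ∀ E : Set K, E.Countable → ∃ g : C(K, ℝ), (∀ x, 0 ≤ g x) ∧ (∀ x, g x ≤ 1) ∧
      (∀ x ∈ E, g x = 0) ∧ ∃ z ∈ S, g z = 1 ∧ z ∉ E := by
    intro E hE
    obtain ⟨z, hzS, hz⟩ := hex E hE
    obtain ⟨g, hg0, hg1, hg01⟩ := exists_continuous_zero_one_of_isClosed
      (isClosed_closure (s := E)) (isClosed_singleton (x := z)) (by simpa using hz)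
    exact ⟨g, fun x => (hg01 x).1, fun x => (hg01 x).2, fun x hx => hg0 (subset_closure hx),
      z, hzS, hg1 rfl, fun h => hz (subset_closure h)⟩
  obtain ⟨b, d, hd, hb0, hb1, hbx, hφb⟩ : ∃ (b : C(K, ℝ)) (d : ℝ), 0 < d ∧ (∀ x, 0 ≤ b x) ∧
      (∀ x, b x ≤ 1) ∧ b x₀ = 1 ∧ φ b = 1 - d := by
    obtain ⟨g, hg0, hg1, hgx, z, hzS, hgz, -⟩ := bump {x₀} (countable_singleton _)
    refine ⟨1 - g, φ g, hS g hg0 z hzS (by rw [hgz]; exact one_pos), ?_, ?_, ?_, ?_⟩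
    · intro x; simpa using hg1 x
    · intro x; simpa using hg0 x
    · simp [hgx x₀ rfl]
    · simp [h1]
  have hcomb : ∀ (F : Finset K) (c : K → ℝ) (hc : ∀ x ∈ F, 0 ≤ c x) (hs : ∑ x ∈ F, c x = 1),
      ↑F ⊆ gdeltaPts K \ {x₀} → combBall Y F c hc hs ∈ 𝔰.inducedSet := by
    intro F c hc hs hFG
    obtain ⟨p0, hp00, hp01, hp0z⟩ := exists_zero_fun F.finite_toSet fun x hx => (hFG hx).1
    have hq : 0 < p0 x₀ := (hp00 x₀).lt_of_ne' fun h => (hFG ((hp0z x₀).1 h)).2 rfl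
    have hq1 := hp01 x₀
    have hφp0 := hpos p0 hp00
    have hφp1 : φ p0 ≤ 1 := by
      have := hpos (1 - p0) fun x => by simpa using hp01 x
      simp only [map_sub, h1] at this; linarith
    have hoff : ∀ x, x ∉ F → 0 < p0 x := fun x hx =>
      (hp00 x).lt_of_ne' fun h => hx (by simpa using (hp0z x).1 h)
    have hon : ∀ x ∈ F, p0 x = 0 := fun x hx => (hp0z x).2 (by simpa using hx)
    -- `p1`, `p2` vanish exactly on `F`, with opposite signs of `φ p - p x₀`
    obtain ⟨p1, hp1on, hp1off, hp1⟩ : ∃ p : C(K, ℝ), (∀ x ∈ F, p x = 0) ∧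
        (∀ x, x ∉ F → 0 < p x) ∧ p x₀ < φ p := by
      obtain ⟨g, hg0, hg1, hgx, z, hzS, hgz, hzF⟩ := bump (insert x₀ (F : Set K))
        (F.countable_toSet.insert _)
      have hpg : 0 < φ (p0 * g) := by
        refine hS _ (fun x => mul_nonneg (hp00 x) (hg0 x)) z hzS ?_
        simp only [ContinuousMap.mul_apply, hgz, mul_one]
        exact hoff z fun h => hzF (Or.inr (by simpa using h))
      refine ⟨p0 * g + (φ (p0 * g) / 2) • p0, fun x hx => by simp [hon x hx], fun x hx => ?_, ?_⟩
      · simp only [ContinuousMap.add_apply, ContinuousMap.mul_apply, ContinuousMap.smul_apply,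
          smul_eq_mul]
        exact add_pos_of_nonneg_of_pos (mul_nonneg (hp00 x) (hg0 x))
          (mul_pos (by positivity) (hoff x hx))
      · simp only [ContinuousMap.add_apply, ContinuousMap.mul_apply, ContinuousMap.smul_apply,
          smul_eq_mul, hgx x₀ (mem_insert _ _), map_add, map_smul]
        nlinarith
    obtain ⟨p2, hp2on, hp2off, hp2⟩ : ∃ p : C(K, ℝ), (∀ x ∈ F, p x = 0) ∧
        (∀ x, x ∉ F → 0 < p x) ∧ φ p < p x₀ := by
      let m : C(K, ℝ) := ⟨fun x => min (p0 x) (p0 x₀), by fun_prop⟩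
      have hm0 : ∀ x, 0 ≤ m x := fun x => le_min (hp00 x) hq.le
      have hmx : m x₀ = p0 x₀ := min_self _
      have hmb : φ (m * b) ≤ p0 x₀ * (1 - d) := by
        have := hpos (p0 x₀ • b - m * b) fun x => by
          have h1 : m x ≤ p0 x₀ := min_le_right _ _
          simpa using mul_le_mul_of_nonneg_right h1 (hb0 x)
        simp only [map_sub, map_smul, smul_eq_mul, hφb] at this
        linarith
      have hε : 0 < p0 x₀ * d / 2 := by positivity
      refine ⟨m * b + (p0 x₀ * d / 2) • p0, fun x hx => ?_, fun x hx => ?_, ?_⟩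
      · have : m x = 0 := by
          change min (p0 x) (p0 x₀) = 0
          rw [hon x hx]; exact min_eq_left hq.le
        simp [hon x hx, this]
      · simp only [ContinuousMap.add_apply, ContinuousMap.mul_apply, ContinuousMap.smul_apply,
          smul_eq_mul]
        exact add_pos_of_nonneg_of_pos (mul_nonneg (hm0 x) (hb0 x)) (mul_pos hε (hoff x hx))
      · simp only [ContinuousMap.add_apply, ContinuousMap.mul_apply, ContinuousMap.smul_apply,
          smul_eq_mul, hmx, hbx, map_add, map_smul]
        nlinarith
    set l1 := φ p1 - p1 x₀ with hl1
    set l2 := p2 x₀ - φ p2 with hl2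
    have hl1p : 0 < l1 := sub_pos.2 hp1
    have hl2p : 0 < l2 := sub_pos.2 hp2
    let p : C(K, ℝ) := l1 • p2 + l2 • p1
    have hpon : ∀ x ∈ F, p x = 0 := fun x hx => by simp [p, hp1on x hx, hp2on x hx]
    have hpoff : ∀ x, x ∉ F → 0 < p x := fun x hx => by
      simp only [p, ContinuousMap.add_apply, ContinuousMap.smul_apply, smul_eq_mul]
      have := hp1off x hx
      have := hp2off x hx
      positivity
    have hpY : φ p = p x₀ := by
      simp only [p, map_add, map_smul, smul_eq_mul, ContinuousMap.add_apply,
        ContinuousMap.smul_apply]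
      rw [hl1, hl2]; ring
    have hM : 0 < ‖p‖ + 1 := by positivity
    refine comb_mem_of_peak 𝔰 F ⟨1 - (‖p‖ + 1)⁻¹ • p, ?_⟩ ?_ ?_ ?_ c hc hs
    · rw [hYmem]; simp [h1, hpY]
    · intro x hx; simp [hpon x hx]
    · intro x hx
      have h2 := hpoff x hx
      have h3 : p x ≤ ‖p‖ := (le_abs_self _).trans (p.norm_coe_le_norm x)
      have h4 : (‖p‖ + 1)⁻¹ * p x < 1 := by
        rw [inv_mul_lt_iff₀ hM]; linarith
      have h5 : 0 < (‖p‖ + 1)⁻¹ * p x := by positivity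
      simp only [ContinuousMap.sub_apply, ContinuousMap.one_apply, ContinuousMap.smul_apply,
        smul_eq_mul]
      rw [abs_lt]; constructor <;> linarith
    · intro x hx
      obtain ⟨h, hh0, hh1, -⟩ := exists_continuous_zero_one_of_isClosed
        ((F.erase x).finite_toSet.isClosed) (isClosed_singleton (x := x)) (by simp)
      refine ⟨⟨h - ((φ h - h x₀) / l1) • p1, ?_⟩, ?_, ?_⟩
      · rw [hYmem]
        simp only [map_sub, map_smul, smul_eq_mul, ContinuousMap.sub_apply,
          ContinuousMap.smul_apply]
        field_simp
        rw [hl1]; ring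
      · simp [hp1on x hx, hh1 (mem_singleton x)]
      · intro y hy hyx
        have : h y = 0 := hh0 (by simp [hy, hyx])
        simp [hp1on y hy, this]
  -- the functional `φ` restricts to the evaluation at `x₀`, which lies in the induced set
  have hx₀D : evBall Y x₀ ∈ 𝔰.inducedSet := by
    obtain ⟨C, hCG, hC, hxC⟩ := tight_of_hered hH hG (hG' x₀)
    refine 𝔰.closure_countable (hC.image _) ?_
      (image_closure_subset_closure_image (evBall_continuous Y) (mem_image_of_mem _ hxC))
    rintro _ ⟨y, hy, rfl⟩
    have := hcomb {y} (fun _ => 1) (by simp) (by simp) (by simpa using hCG hy)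
    convert this using 1
    exact dualBall_ext fun h => by simp
  let A : Set (dualBall Y) := {w | ∃ (F : Finset K) (c : K → ℝ) (hc : ∀ x ∈ F, 0 ≤ c x)
    (hs : ∑ x ∈ F, c x = 1), ↑F ⊆ gdeltaPts K \ {x₀} ∧ |∑ x ∈ F, c x * b x - φ b| < d / 2 ∧
    w = combBall Y F c hc hs}
  have hAcl : evBall Y x₀ ∈ closure A := by
    have happ : ∀ i : Finset Y × ℕ, ∃ w ∈ A, ∀ f ∈ i.1, |w.1 f - f.1 x₀| < 1 / ((i.2 : ℝ) + 1) := by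
      intro i
      obtain ⟨F, c, hFD, hc, hs, happ⟩ := exists_comb_approx φ hpos h1 hG'
        (fun o : Option i.1 => o.elim b fun t => t.1.1)
        (ε := min (d / 2) (1 / ((i.2 : ℝ) + 1))) (lt_min (by positivity) (by positivity))
      refine ⟨combBall Y F c hc hs, ⟨F, c, hc, hs, hFD, (happ none).trans_le (min_le_left _ _),
        rfl⟩, fun f hf => ?_⟩
      have := (happ (some ⟨f, hf⟩)).trans_le (min_le_right _ _)
      have hf' : φ f.1 = f.1 x₀ := f.2
      simpa [hf'] using this
    choose w hwA hw using happ
    refine mem_closure_of_tendsto (b := atTop) (f := w) (dualBall_tendsto fun f => ?_)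
      (Eventually.of_forall hwA)
    rw [tendsto_iff_dist_tendsto_zero]
    have h0 : Tendsto (fun i : Finset Y × ℕ => 1 / ((i.2 : ℝ) + 1)) atTop (𝓝 0) := by
      rw [← prod_atTop_atTop_eq]
      exact tendsto_one_div_add_atTop_nhds_zero_nat.comp tendsto_snd
    refine squeeze_zero' (Eventually.of_forall fun _ => dist_nonneg) ?_ h0
    filter_upwards [eventually_ge_atTop (({f}, 0) : Finset Y × ℕ)] with i hi
    exact (hw i f (hi.1 (by simp))).le
  obtain ⟨C, hCA, hC, hxC⟩ := 𝔰.tight (by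
    rintro _ ⟨F, c, hc, hs, hF, -, rfl⟩; exact hcomb F c hc hs hF) hx₀D hAcl
  have hCA' : ∀ w, w ∈ C → w ∈ A := fun _ h => hCA h
  choose! F c hc hs hF hcb hw using hCA'
  obtain ⟨f1, hf10, -, hf1E, z, hzS, hf1z, -⟩ := bump (insert x₀ (⋃ w ∈ C, (F w : Set K)))
    ((hC.biUnion fun w _ => (F w).countable_toSet).insert _)
  have hκ : 0 < φ f1 := hS f1 hf10 z hzS (by rw [hf1z]; exact one_pos)
  have hfx : (b + (d / φ f1) • f1) x₀ = 1 := by simp [hbx, hf1E x₀ (mem_insert _ _)]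
  have hfY : b + (d / φ f1) • f1 ∈ Y := by
    rw [hYmem, hfx]
    simp only [map_add, map_smul, smul_eq_mul, hφb]
    field_simp; ring
  have hsub : C ⊆ {w | w.1 ⟨b + (d / φ f1) • f1, hfY⟩ ≤ 1 - d / 2} := by
    intro w hwC
    have h2 := hw w hwC
    have h3 : w.1 ⟨b + (d / φ f1) • f1, hfY⟩ = ∑ x ∈ F w, c w x * b x := by
      conv_lhs => rw [h2]
      rw [combBall_apply]
      refine Finset.sum_congr rfl fun x hx => ?_
      have : f1 x = 0 := hf1E x (Or.inr (mem_biUnion hwC hx))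
      simp [this]
    have h4 := (abs_lt.1 (hcb w hwC)).2
    rw [hφb] at h4
    change w.1 ⟨b + (d / φ f1) • f1, hfY⟩ ≤ 1 - d / 2
    rw [h3]; linarith
  have := closure_minimal hsub (isClosed_le (dualBall_eval_continuous _) continuous_const) hxC
  have h0 : (b + (d / φ f1) • f1) x₀ ≤ 1 - d / 2 := this
  rw [hfx] at h0
  linarith

end PropertyM

section PropertyMeasure
open MeasureTheory
variable {K : Type u} [TopologicalSpace K] [CompactSpace K] [T2Space K]
  [MeasurableSpace K] [BorelSpace K]

lemma integrable_continuousMap (μ : Measure K) [IsFiniteMeasure μ] (f : C(K, ℝ)) :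
    Integrable f μ :=
  f.continuous.integrable_of_hasCompactSupport (HasCompactSupport.of_compactSpace f)

lemma hasPropertyM_of_hered (hH : HeredSkeleton K) (hG : Dense (gdeltaPts K)) :
    HasPropertyM K := by
  intro μ hμ _
  let φ : C(K, ℝ) →ₗ[ℝ] ℝ :=
    { toFun := fun f => ∫ x, f x ∂μ
      map_add' := fun f g => integral_add (integrable_continuousMap μ f)
        (integrable_continuousMap μ g)
      map_smul' := fun c f => integral_const_mul c _ }
  refine isSeparable_of_hered hH hG φ (fun f hf => integral_nonneg hf) ?_ ?_
  · change ∫ x, (1 : C(K, ℝ)) x ∂μ = 1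
    simp
  · intro f hf z hz hfz
    change 0 < ∫ x, f x ∂μ
    rw [integral_pos_iff_support_of_nonneg hf (integrable_continuousMap μ f)]
    exact hz _ (f.continuous.isOpen_support.mem_nhds hfz.ne')

end PropertyMeasure

/-! ### From 1-projectional skeletons to retractional skeletons -/

section ProjToRetr
variable {X : Type u} [NormedAddCommGroup X] [NormedSpace ℝ X]

attribute [instance] ProjectionalSkeleton.po ProjectionalSkeleton.ne

/-- The adjoint of a norm-one operator, acting on the dual ball. -/
noncomputable def adjBall (P : X →L[ℝ] X) (hP : ‖P‖ ≤ 1) : C(dualBall X, dualBall X) where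
  toFun z := ballMk ((WeakDual.toStrongDual z.1).toLinearMap ∘ₗ P.toLinearMap) fun x => by
    refine (z.2 (P x)).trans ((P.le_opNorm x).trans ?_)
    exact mul_le_of_le_one_left (norm_nonneg x) hP
  continuous_toFun := dualBall_continuous_of_eval fun x => dualBall_eval_continuous (P x)

@[simp] lemma adjBall_apply (P : X →L[ℝ] X) (hP : ‖P‖ ≤ 1) (z : dualBall X) (x : X) :
    (adjBall P hP z).1 x = z.1 (P x) := rfl

lemma adjBall_metrizable (P : X →L[ℝ] X) (hP : ‖P‖ ≤ 1) (hsep : IsSeparable (range P))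
    (hidem : ∀ x, P (P x) = P x) : MetrizableSpace ↥(range (adjBall P hP)) := by
  obtain ⟨C, hC, hCcl⟩ := hsep
  haveI := hC.to_subtype
  haveI : CompactSpace (range (adjBall P hP)) :=
    isCompact_iff_compactSpace.1 (isCompact_range (adjBall P hP).continuous)
  let e : range (adjBall P hP) → C → ℝ := fun z c => z.1.1 c.1
  have hcont : Continuous e := continuous_pi fun c =>
    (dualBall_eval_continuous c.1).comp continuous_subtype_val
  have hinj : Function.Injective e := by
    intro z z' h
    have key : ∀ x ∈ range P, z.1.1 x = z'.1.1 x := by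
      intro x hx
      have hcl : IsClosed {x | z.1.1 x = z'.1.1 x} :=
        isClosed_eq (WeakDual.toStrongDual z.1.1).continuous
          (WeakDual.toStrongDual z'.1.1).continuous
      exact closure_minimal (fun c hc => congrFun h ⟨c, hc⟩) hcl (hCcl hx)
    obtain ⟨_, w, rfl⟩ := z
    obtain ⟨_, w', rfl⟩ := z'
    refine Subtype.ext (dualBall_ext fun x => ?_)
    have := key (P x) ⟨x, rfl⟩
    simpa [hidem] using this
  exact (hcont.isClosedEmbedding hinj).isEmbedding.metrizableSpace

lemma Has1ProjectionalSkeleton.hasRetractionalSkeleton (h : Has1ProjectionalSkeleton X) :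
    HasRetractionalSkeleton ↥(dualBall X) := by
  obtain ⟨𝔰, h1⟩ := h
  haveI : IsDirectedOrder 𝔰.Γ := ⟨fun a b => 𝔰.directed a b⟩
  refine ⟨{ Γ := 𝔰.Γ
            po := 𝔰.po
            ne := 𝔰.ne
            directed := 𝔰.directed
            r := fun s => adjBall (𝔰.P s) (h1 s)
            isRetraction := fun s z => dualBall_ext fun x => by simp [𝔰.idem]
            metrizable := fun s => adjBall_metrizable _ _ (𝔰.separable s) (𝔰.idem s)
            tendsto_id := fun z => dualBall_tendsto fun x => ?_
            comp_eq_of_le := fun s t hst z => ⟨dualBall_ext fun x => ?_, dualBall_ext fun x => ?_⟩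
            sup_seq := fun f hf => ?_ }⟩
  · obtain ⟨s, y, hy⟩ := 𝔰.covers x
    refine tendsto_const_nhds.congr' ?_
    filter_upwards [eventually_ge_atTop s] with t hst
    rw [adjBall_apply, ← hy, (𝔰.comp_eq_of_le s t hst y).2]
  · simp [(𝔰.comp_eq_of_le s t hst x).2]
  · simp [(𝔰.comp_eq_of_le s t hst x).1]
  · obtain ⟨t, ht, hr⟩ := 𝔰.sup_seq f hf
    refine ⟨t, ht, fun z => dualBall_tendsto fun x => ?_⟩
    have hconv : Tendsto (fun n => 𝔰.P (f n) x) atTop (𝓝 (𝔰.P t x)) := by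
      rw [Metric.tendsto_atTop]
      intro ε hε
      have hmem : 𝔰.P t x ∈ closure (⋃ n, range (𝔰.P (f n))) := hr ▸ ⟨x, rfl⟩
      obtain ⟨y, hy, hyd⟩ := Metric.mem_closure_iff.1 hmem (ε / 2) (half_pos hε)
      obtain ⟨N, y', rfl⟩ := mem_iUnion.1 hy
      refine ⟨N, fun n hn => ?_⟩
      have e1 : 𝔰.P (f n) x = 𝔰.P (f n) (𝔰.P t x) :=
        ((𝔰.comp_eq_of_le _ _ (ht.1 ⟨n, rfl⟩) x).1).symm
      have e2 : 𝔰.P (f n) (𝔰.P (f N) y') = 𝔰.P (f N) y' :=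
        (𝔰.comp_eq_of_le _ _ (hf.monotone hn) y').2
      have e3 : ‖𝔰.P (f n) (𝔰.P t x - 𝔰.P (f N) y')‖ ≤ ‖𝔰.P t x - 𝔰.P (f N) y'‖ :=
        ((𝔰.P (f n)).le_opNorm _).trans (mul_le_of_le_one_left (norm_nonneg _) (h1 _))
      rw [map_sub, e2, ← e1, ← dist_eq_norm, ← dist_eq_norm] at e3
      calc _ ≤ dist (𝔰.P (f n) x) (𝔰.P (f N) y') + dist (𝔰.P (f N) y') (𝔰.P t x) :=
            dist_triangle _ _ _
        _ < ε := by rw [dist_comm (𝔰.P (f N) y')]; linarith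
    exact ((WeakDual.toStrongDual z.1).continuous.tendsto _).comp hconv

end ProjToRetr

/-! ### Coordinate retractions of a Corson compact space -/

section CorsonRetractions
variable {K : Type u} [TopologicalSpace K] {Γ : Type v}

/-- For `e : K → ℝ^Γ`, the coordinate set `C` is good if erasing all coordinates outside `C`
is (induced by) a continuous self-map of `K`. -/
def GoodSet (e : K → Γ → ℝ) (C : Set Γ) : Prop :=
  ∃ ρ : C(K, K), ∀ x, e (ρ x) = C.indicator (e x)

open Classical in
/-- The retraction of `K` erasing all coordinates outside the good set `C`; the identity when
`C` is not good. -/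
noncomputable def coordRetraction (e : K → Γ → ℝ) (C : Set Γ) : C(K, K) :=
  if h : GoodSet e C then h.choose else ContinuousMap.id K

variable {e : K → Γ → ℝ}

lemma GoodSet.apply {C : Set Γ} (h : GoodSet e C) (x : K) :
    e (coordRetraction e C x) = C.indicator (e x) := by
  rw [coordRetraction, dif_pos h]
  exact h.choose_spec x

lemma GoodSet.eq_self (hi : Function.Injective e) {C : Set Γ} (h : GoodSet e C) {x : K}
    (hx : ∀ γ ∉ C, e x γ = 0) : coordRetraction e C x = x := by
  apply hi
  rw [h.apply]
  exact indicator_eq_self.2 fun γ hγ => by_contra fun hc => hγ (hx γ hc)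

lemma GoodSet.comp_left (hi : Function.Injective e) {C D : Set Γ} (h : GoodSet e C)
    (h' : GoodSet e D) (hCD : C ⊆ D) (x : K) :
    coordRetraction e C (coordRetraction e D x) = coordRetraction e C x := by
  apply hi
  rw [h.apply, h'.apply, h.apply, indicator_indicator, inter_eq_left.2 hCD]

lemma GoodSet.comp_right (hi : Function.Injective e) {C D : Set Γ} (h : GoodSet e C)
    (h' : GoodSet e D) (hCD : C ⊆ D) (x : K) :
    coordRetraction e D (coordRetraction e C x) = coordRetraction e C x := by
  apply hi
  rw [h'.apply, h.apply, indicator_indicator, inter_eq_right.2 hCD]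

lemma eq_zero_of_mem_closure (he : Continuous e) {E : Set K} {γ : Γ}
    (h : ∀ y ∈ E, e y γ = 0) {z : K} (hz : z ∈ closure E) : e z γ = 0 := by
  have hc : IsClosed {y : K | e y γ = 0} :=
    isClosed_eq ((continuous_apply γ).comp he) continuous_const
  exact closure_minimal (t := {y : K | e y γ = 0}) (fun y hy => h y hy) hc hz

variable [CompactSpace K] [T2Space K]

/-- Continuity of coordinate erasure is automatic, as `e` is a closed embedding. -/
lemma goodSet_of_forall (he : Continuous e) (hi : Function.Injective e) {C : Set Γ}
    (h : ∀ x, ∃ y, e y = C.indicator (e x)) : GoodSet e C := by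
  classical
  choose ρ hρ using h
  refine ⟨⟨ρ, ?_⟩, hρ⟩
  rw [(he.isClosedEmbedding hi).isEmbedding.continuous_iff]
  rw [continuous_pi_iff]
  intro γ
  have : (fun x => (e ∘ ρ) x γ) = fun x => C.indicator (e x) γ := by
    funext x; simp [hρ]
  rw [this]
  by_cases hγ : γ ∈ C
  · simp only [indicator_of_mem hγ]
    exact (continuous_apply γ).comp he
  · simp only [indicator_of_notMem hγ]
    exact continuous_const

lemma exists_indicator_iUnion (he : Continuous e) {C : ℕ → Set Γ} (hC : Monotone C) {x : K}
    {z : ℕ → K} (h1 : ∀ n, EqOn (e (z n)) (e x) (C n))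
    (h0 : ∀ n, ∀ γ ∉ ⋃ k, C k, e (z n) γ = 0) :
    ∃ y, e y = (⋃ n, C n).indicator (e x) := by
  -- any cluster point of the sequence `z` works
  obtain ⟨y, -, hy⟩ := isCompact_univ (X := K) (f := map z atTop) (by simp)
  refine ⟨y, funext fun γ => ?_⟩
  have hcl : MapClusterPt (e y γ) atTop (fun n => e (z n) γ) := by
    have : MapClusterPt y atTop z := hy
    exact this.continuousAt_comp ((continuous_apply γ).comp he).continuousAt
  have key : ∀ a : ℝ, (∀ᶠ n in atTop, e (z n) γ = a) → e y γ = a := by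
    intro a ha
    by_contra hne
    have hU : {a}ᶜ ∈ 𝓝 (e y γ) := isOpen_compl_singleton.mem_nhds hne
    obtain ⟨n, hn1, hn2⟩ := ((hcl.frequently hU).and_eventually ha).exists
    exact hn1 hn2
  by_cases hγ : γ ∈ ⋃ n, C n
  · rw [indicator_of_mem hγ]
    obtain ⟨n, hn⟩ := mem_iUnion.1 hγ
    exact key _ (eventually_atTop.2 ⟨n, fun m hm => h1 m (hC hm hn)⟩)
  · rw [indicator_of_notMem hγ]
    exact key _ (Eventually.of_forall fun n => h0 n γ hγ)

lemma GoodSet.iUnion (he : Continuous e) (hi : Function.Injective e) {C : ℕ → Set Γ}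
    (hC : Monotone C) (h : ∀ n, GoodSet e (C n)) : GoodSet e (⋃ n, C n) := by
  refine goodSet_of_forall he hi fun x => ?_
  refine exists_indicator_iUnion he hC (z := fun n => coordRetraction e (C n) x) ?_ ?_
  · intro n γ hγ
    simp [(h n).apply, hγ]
  · intro n γ hγ
    rw [(h n).apply, indicator_of_notMem fun h => hγ (mem_iUnion.2 ⟨n, h⟩)]

/-- Countably many points of `K` have dense restrictions to a countable `C`; adding their
supports to `C` yields `C'`. -/
lemma exists_countable_step (he : Continuous e)
    (hs : ∀ x, {γ | e x γ ≠ 0}.Countable) {C : Set Γ} (hC : C.Countable) :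
    ∃ C' : Set Γ, C'.Countable ∧ C ⊆ C' ∧
      ∀ x, ∃ z, EqOn (e z) (e x) C ∧ ∀ γ ∉ C', e z γ = 0 := by
  have : Countable C := hC.to_subtype
  let π : K → C → ℝ := fun x c => e x c
  have hπ : Continuous π := continuous_pi fun c => (continuous_apply (c : Γ)).comp he
  obtain ⟨D, hDc, hD⟩ := exists_countable_dense (range π)
  rw [Subtype.dense_iff] at hD
  have hg : ∀ p : range π, ∃ x, π x = p := fun p => p.2
  choose g hg using hg
  refine ⟨C ∪ ⋃ y ∈ g '' D, {γ | e y γ ≠ 0},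
    hC.union ((hDc.image g).biUnion fun y _ => hs y), subset_union_left, fun x => ?_⟩
  have hcl : IsClosed (π '' closure (g '' D)) := (isClosed_closure.isCompact.image hπ).isClosed
  have hsub : ((↑) '' D : Set (C → ℝ)) ⊆ π '' closure (g '' D) := by
    rintro _ ⟨p, hp, rfl⟩
    exact ⟨g p, subset_closure ⟨p, hp, rfl⟩, hg p⟩
  obtain ⟨z, hz, hzx⟩ := closure_minimal hsub hcl (hD ⟨x, rfl⟩)
  refine ⟨z, fun γ hγ => congrFun hzx ⟨γ, hγ⟩, fun γ hγ => ?_⟩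
  refine eq_zero_of_mem_closure he (fun y hy => ?_) hz
  by_contra hne
  exact hγ (Or.inr (mem_biUnion hy hne))

lemma exists_goodSet (he : Continuous e) (hi : Function.Injective e)
    (hs : ∀ x, {γ | e x γ ≠ 0}.Countable) {C : Set Γ} (hC : C.Countable) :
    ∃ D : Set Γ, D.Countable ∧ C ⊆ D ∧ GoodSet e D := by
  choose step hstep using fun C : {C : Set Γ // C.Countable} => exists_countable_step he hs C.2
  let next : {C : Set Γ // C.Countable} → {C : Set Γ // C.Countable} :=
    fun C => ⟨step C, (hstep C).1⟩
  let F : ℕ → {C : Set Γ // C.Countable} := fun n => next^[n] ⟨C, hC⟩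
  have hF : ∀ n, (F (n + 1)).1 = step (F n) := fun n => by
    simp only [F, Function.iterate_succ_apply']
    rfl
  have hmono : Monotone fun n => (F n).1 := monotone_nat_of_le_succ fun n => by
    rw [hF]
    exact (hstep _).2.1
  refine ⟨⋃ n, (F n).1, countable_iUnion fun n => (F n).2,
    subset_iUnion (fun n => (F n).1) 0, goodSet_of_forall he hi fun x => ?_⟩
  choose z hz1 hz0 using fun n => (hstep (F n)).2.2 x
  refine exists_indicator_iUnion he hmono hz1 fun n γ hγ => hz0 n γ fun h => hγ ?_
  rw [← hF] at h
  exact mem_iUnion.2 ⟨n + 1, h⟩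

/-! ### The projections induced on `C(K)` -/

/-- A continuous function depends on finitely many coordinates up to `ε`. -/
lemma exists_finset_close (he : Continuous e) (hi : Function.Injective e) (f : C(K, ℝ))
    {ε : ℝ} (hε : 0 < ε) :
    ∃ J : Finset Γ, ∀ x y, (∀ γ ∈ J, e x γ = e y γ) → |f x - f y| < ε := by
  let A : Set (K × K) := {p | ε ≤ |f p.1 - f p.2|}
  have hA : IsCompact A := (isClosed_le continuous_const (by fun_prop)).isCompact
  have hcov : A ⊆ ⋃ γ, {p : K × K | e p.1 γ ≠ e p.2 γ} := by
    intro p hp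
    by_contra hn
    have hpe : e p.1 = e p.2 := funext fun γ => by
      by_contra hne
      exact hn (mem_iUnion.2 ⟨γ, hne⟩)
    have : ε ≤ |f p.1 - f p.2| := hp
    rw [hi hpe, sub_self, abs_zero] at this
    exact absurd hε this.not_gt
  obtain ⟨J, hJ⟩ := hA.elim_finite_subcover _ (fun γ => by
    have hc := (continuous_apply γ).comp he
    exact isOpen_ne_fun (hc.comp continuous_fst) (hc.comp continuous_snd)) hcov
  refine ⟨J, fun x y hxy => ?_⟩
  by_contra hn
  have hmem : (x, y) ∈ A := not_lt.1 hn
  obtain ⟨γ, hγ, hne⟩ := mem_iUnion₂.1 (hJ hmem)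
  exact hne (hxy γ hγ)

lemma exists_countable_comp_eq (he : Continuous e) (hi : Function.Injective e) (f : C(K, ℝ)) :
    ∃ D : Set Γ, D.Countable ∧ ∀ C, GoodSet e C → D ⊆ C →
      f.comp (coordRetraction e C) = f := by
  choose J hJ using fun n : ℕ => exists_finset_close he hi f
    (ε := 1 / ((n : ℝ) + 1)) (by positivity)
  refine ⟨⋃ n, (J n : Set Γ), countable_iUnion fun n => (J n).countable_toSet,
    fun C hC hDC => ContinuousMap.ext fun x => ?_⟩
  refine eq_of_sub_eq_zero (abs_eq_zero.1 (le_antisymm ?_ (abs_nonneg _)))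
  refine ge_of_tendsto' tendsto_one_div_add_atTop_nhds_zero_nat fun n => ?_
  refine (hJ n _ _ fun γ hγ => ?_).le
  rw [hC.apply, indicator_of_mem (hDC (mem_iUnion.2 ⟨n, hγ⟩))]

lemma tendsto_comp_coordRetraction (he : Continuous e) (hi : Function.Injective e)
    {C : ℕ → Set Γ} (hC : Monotone C) (h : ∀ n, GoodSet e (C n)) (f : C(K, ℝ)) :
    Tendsto (fun n => f.comp (coordRetraction e (C n))) atTop
      (𝓝 (f.comp (coordRetraction e (⋃ n, C n)))) := by
  have hU := GoodSet.iUnion he hi hC h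
  rw [Metric.tendsto_atTop]
  intro ε hε
  obtain ⟨J, hJ⟩ := exists_finset_close he hi f (half_pos hε)
  -- the finitely many coordinates of `J` lying in the union already lie in one `C N`
  have hfin : ∃ N, ∀ γ ∈ J, γ ∈ ⋃ n, C n → γ ∈ C N := by
    have hev : ∀ γ ∈ J, ∀ᶠ n in atTop, γ ∈ ⋃ n, C n → γ ∈ C n := by
      intro γ _
      by_cases hγ : γ ∈ ⋃ n, C n
      · obtain ⟨n, hn⟩ := mem_iUnion.1 hγ
        exact eventually_atTop.2 ⟨n, fun m hm _ => hC hm hn⟩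
      · exact Eventually.of_forall fun n h => absurd h hγ
    exact ((Finset.eventually_all J).2 hev).exists
  obtain ⟨N, hN⟩ := hfin
  refine ⟨N, fun n hn => lt_of_le_of_lt ?_ (half_lt_self hε)⟩
  rw [ContinuousMap.dist_le (half_pos hε).le]
  intro x
  rw [Real.dist_eq]
  refine (hJ _ _ fun γ hγ => ?_).le
  rw [(h n).apply, hU.apply]
  by_cases hγC : γ ∈ ⋃ n, C n
  · rw [indicator_of_mem hγC, indicator_of_mem (hC hn (hN γ hγ hγC))]
  · rw [indicator_of_notMem hγC, indicator_of_notMem fun h' => hγC (mem_iUnion.2 ⟨n, h'⟩)]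

lemma isSeparable_range_comp (he : Continuous e) (hi : Function.Injective e) {C : Set Γ}
    (hCc : C.Countable) (hC : GoodSet e C) :
    IsSeparable (range fun f : C(K, ℝ) => f.comp (coordRetraction e C)) := by
  have : Countable C := hCc.to_subtype
  let R : Set K := range (coordRetraction e C)
  have hRc : CompactSpace R :=
    isCompact_iff_compactSpace.1 (isCompact_range (coordRetraction e C).continuous)
  let π : R → C → ℝ := fun x c => e x c
  have hπ : Continuous π :=
    continuous_pi fun c => (continuous_apply (c : Γ)).comp (he.comp continuous_subtype_val)
  have hπi : Function.Injective π := by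
    rintro ⟨_, x, rfl⟩ ⟨_, y, rfl⟩ hxy
    apply Subtype.ext
    apply hi
    funext γ
    by_cases hγ : γ ∈ C
    · exact congrFun hxy ⟨γ, hγ⟩
    · simp [hC.apply, hγ]
  have : SecondCountableTopology R :=
    (hπ.isClosedEmbedding hπi).isEmbedding.secondCountableTopology
  let q : C(K, R) := ⟨fun x => ⟨coordRetraction e C x, x, rfl⟩, by fun_prop⟩
  have hsep : IsSeparable (univ : Set C(R, ℝ)) := IsSeparable.of_separableSpace _
  refine (hsep.image (f := fun g : C(R, ℝ) => g.comp q)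
    (ContinuousMap.continuous_precomp q)).mono ?_
  rintro _ ⟨f, rfl⟩
  exact ⟨f.comp ⟨Subtype.val, continuous_subtype_val⟩, mem_univ _, rfl⟩

end CorsonRetractions

/-! ### Jordan decomposition of functionals on `C(K)` -/

section Jordan

/-- Hahn–Banach extension of a contractive functional given on the range of an injective map. -/
lemma exists_extension_of_le_norm {V : Type*} {E : Type*} [AddCommGroup V] [Module ℝ V]
    [NormedAddCommGroup E] [NormedSpace ℝ E] {T : V →ₗ[ℝ] E} (hT : Function.Injective T)
    (g₀ : V →ₗ[ℝ] ℝ) (h : ∀ v, |g₀ v| ≤ ‖T v‖) :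
    ∃ Φ : StrongDual ℝ E, (∀ v, Φ (T v) = g₀ v) ∧ ‖Φ‖ ≤ 1 := by
  let I := LinearEquiv.ofInjective T hT
  let g : StrongDual ℝ (LinearMap.range T) :=
    (g₀.comp I.symm.toLinearMap).mkContinuous 1 (by
      intro v
      obtain ⟨p, rfl⟩ := I.surjective v
      rw [LinearMap.comp_apply, LinearEquiv.coe_coe, I.symm_apply_apply, one_mul]
      exact h p)
  have hg : ∀ p, g (I p) = g₀ p := fun p => by
    change g₀ (I.symm (I p)) = g₀ p
    rw [I.symm_apply_apply]
  have hgn : ‖g‖ ≤ 1 := LinearMap.mkContinuous_norm_le _ zero_le_one _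
  obtain ⟨Φ, hΦ, hΦn⟩ := exists_extension_norm_eq (LinearMap.range T) g
  exact ⟨Φ, fun v => by rw [← hg v, ← hΦ]; rfl, hΦn.trans_le hgn⟩

variable {K : Type u} [TopologicalSpace K] [CompactSpace K]

/-- A contractive functional on `C(K)` is a difference of two positive ones. The functional
`(f + c, -f + c) ↦ φ f + c` on a subspace of `C(K) × C(K)` is contractive and takes the value
`1` at `(1, 1)`, hence so does a Hahn–Banach extension, which is therefore positive. -/
lemma exists_positive_sub [Nonempty K] (φ : StrongDual ℝ C(K, ℝ)) (hφ : ‖φ‖ ≤ 1) :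
    ∃ φ₁ φ₂ : C(K, ℝ) →ₗ[ℝ] ℝ, (∀ f, 0 ≤ f → 0 ≤ φ₁ f) ∧ (∀ f, 0 ≤ f → 0 ≤ φ₂ f) ∧
      ∀ f, φ f = φ₁ f - φ₂ f := by
  let one : C(K, ℝ) := 1
  let T : C(K, ℝ) × ℝ →ₗ[ℝ] C(K, ℝ) × C(K, ℝ) :=
    { toFun := fun p => (p.1 + p.2 • one, -p.1 + p.2 • one)
      map_add' := fun p q => by ext <;> simp <;> ring
      map_smul' := fun c p => by ext <;> simp <;> ring }
  have hT : ∀ p, T p = (p.1 + p.2 • one, -p.1 + p.2 • one) := fun p => rfl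
  have hTi : Function.Injective T := by
    rw [← LinearMap.ker_eq_bot, LinearMap.ker_eq_bot']
    rintro ⟨f, c⟩ h
    rw [hT, Prod.mk_eq_zero] at h
    obtain ⟨h1, h2⟩ := h
    have hx : ∀ x, f x + c = 0 ∧ -f x + c = 0 := fun x =>
      ⟨by simpa [one] using congrArg (fun g : C(K, ℝ) => g x) h1,
        by simpa [one] using congrArg (fun g : C(K, ℝ) => g x) h2⟩
    obtain ⟨x0⟩ := ‹Nonempty K›
    refine Prod.ext (ContinuousMap.ext fun x => ?_) ?_
    · have := hx x
      simp only [ContinuousMap.zero_apply, Prod.fst_zero]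
      linarith [this.1, this.2]
    · have := hx x0
      simp only [Prod.snd_zero]
      linarith [this.1, this.2]
  let g0 : C(K, ℝ) × ℝ →ₗ[ℝ] ℝ :=
    φ.toLinearMap.comp (LinearMap.fst ℝ _ _) + LinearMap.snd ℝ _ _
  have hg0 : ∀ p, g0 p = φ p.1 + p.2 := fun p => rfl
  have hφf : ∀ f, |φ f| ≤ ‖f‖ := fun f => by
    have := φ.le_of_opNorm_le hφ f
    rwa [one_mul, Real.norm_eq_abs] at this
  have hbound : ∀ p, |g0 p| ≤ ‖T p‖ := by
    rintro ⟨f, c⟩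
    have h1 : |g0 (f, c)| ≤ ‖f‖ + |c| :=
      (abs_add_le _ _).trans (add_le_add_left (hφf f) _)
    refine h1.trans ?_
    -- the norm of `f` is nearly attained at some `±f x`, and `|c| = ±c`
    rw [← le_sub_iff_add_le]
    have hn : ∀ x, |f x + c| ≤ ‖T (f, c)‖ ∧ |-f x + c| ≤ ‖T (f, c)‖ := fun x => by
      constructor
      · have := ((T (f, c)).1.norm_coe_le_norm x).trans (norm_fst_le (T (f, c)))
        simpa [hT, one] using this
      · have := ((T (f, c)).2.norm_coe_le_norm x).trans (norm_snd_le (T (f, c)))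
        simpa [hT, one] using this
    have hfc : ∀ x, |f x| ≤ ‖T (f, c)‖ - |c| := fun x => by
      obtain ⟨h1, h2⟩ := hn x
      rw [abs_le] at h1 h2
      rcases abs_cases (f x) with h | h <;> rcases abs_cases c with h' | h' <;> linarith
    obtain ⟨x0⟩ := ‹Nonempty K›
    rw [ContinuousMap.norm_le _ ((abs_nonneg _).trans (hfc x0))]
    exact hfc
  obtain ⟨Φ, hΦ, hΦn⟩ := exists_extension_of_le_norm hTi g0 hbound
  have hΦT : ∀ p, Φ (T p) = φ p.1 + p.2 := fun p => by
    rw [hΦ, hg0]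
  have hΦ1 : Φ (one, one) = 1 := by
    have := hΦT (0, 1)
    simpa [hT] using this
  have hΦle : ∀ v, Φ v ≤ ‖v‖ := fun v => by
    have := Φ.le_of_opNorm_le (hΦn) v
    rw [one_mul] at this
    exact (le_abs_self _).trans this
  have hpos : ∀ v : C(K, ℝ) × C(K, ℝ), 0 ≤ v.1 → 0 ≤ v.2 → 0 ≤ Φ v := by
    intro v h1 h2
    -- `‖r • (1, 1) - v‖ ≤ r` with `r = ‖v‖`
    have hr : ‖‖v‖ • (one, one) - v‖ ≤ ‖v‖ := by
      rw [Prod.norm_def]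
      refine max_le ?_ ?_
      · rw [ContinuousMap.norm_le _ (norm_nonneg _)]
        intro x
        have hx := (v.1.norm_coe_le_norm x).trans (norm_fst_le v)
        have h0 : 0 ≤ v.1 x := h1 x
        rw [Real.norm_eq_abs, abs_of_nonneg h0] at hx
        have : ((‖v‖ • (one, one) - v).1) x = ‖v‖ - v.1 x := by simp [one]
        rw [this, Real.norm_eq_abs, abs_of_nonneg (by linarith)]
        linarith
      · rw [ContinuousMap.norm_le _ (norm_nonneg _)]
        intro x
        have hx := (v.2.norm_coe_le_norm x).trans (norm_snd_le v)
        have h0 : 0 ≤ v.2 x := h2 x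
        rw [Real.norm_eq_abs, abs_of_nonneg h0] at hx
        have : ((‖v‖ • (one, one) - v).2) x = ‖v‖ - v.2 x := by simp [one]
        rw [this, Real.norm_eq_abs, abs_of_nonneg (by linarith)]
        linarith
    have h := (hΦle _).trans hr
    rw [map_sub, map_smul, hΦ1, smul_eq_mul, mul_one] at h
    linarith
  refine ⟨Φ.toLinearMap.comp (LinearMap.inl ℝ _ _), Φ.toLinearMap.comp (LinearMap.inr ℝ _ _),
    fun f hf => hpos (f, 0) hf le_rfl, fun f hf => hpos (0, f) le_rfl hf, fun f => ?_⟩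
  have h := hΦT (f, 0)
  simp only [hT, zero_smul, add_zero] at h
  rw [← h]
  change Φ (f, -f) = Φ (f, 0) - Φ (0, f)
  rw [← map_sub]
  simp

end Jordan

/-! ### Functionals under property (M) -/

section FunctionalM
open MeasureTheory
variable {K : Type u} [TopologicalSpace K] [CompactSpace K] [T2Space K]
  [MeasurableSpace K] [BorelSpace K] {Γ : Type v} {e : K → Γ → ℝ}

/-- The Riesz measure of a positive functional is concentrated on the closure of a countable
set `E`; a coordinate retraction keeping the supports of the points of `E` fixes that closure. -/
lemma exists_countable_positive (he : Continuous e) (hi : Function.Injective e)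
    (hs : ∀ x, {γ | e x γ ≠ 0}.Countable) (hM : HasPropertyM K) (φ : C(K, ℝ) →ₗ[ℝ] ℝ)
    (hφ : ∀ f, 0 ≤ f → 0 ≤ φ f) :
    ∃ D : Set Γ, D.Countable ∧ ∀ C, GoodSet e C → D ⊆ C → ∀ f : C(K, ℝ),
      φ (f.comp (coordRetraction e C)) = φ f := by
  let Λ : CompactlySupportedContinuousMap K ℝ →ₚ[ℝ] ℝ :=
    PositiveLinearMap.mk₀
      { toFun := fun g => φ g.toContinuousMap
        map_add' := fun g g' => φ.map_add g.toContinuousMap g'.toContinuousMap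
        map_smul' := fun c g => φ.map_smul c g.toContinuousMap }
      (fun g hg => hφ _ hg)
  let μ : Measure K := RealRMK.rieszMeasure Λ
  have hμ : ∀ f : C(K, ℝ), ∫ x, f x ∂μ = φ f := fun f =>
    RealRMK.integral_rieszMeasure Λ ⟨f, HasCompactSupport.of_compactSpace f⟩
  have hfin : IsFiniteMeasure μ := inferInstanceAs (IsFiniteMeasure (RealRMK.rieszMeasure Λ))
  have hreg : μ.Regular := inferInstanceAs (RealRMK.rieszMeasure Λ).Regular
  have hsep : IsSeparable μ.support := by
    by_cases h0 : μ = 0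
    · rw [h0, Measure.support_zero]
      exact countable_empty.isSeparable
    · have : NeZero μ := ⟨h0⟩
      have hpr : IsProbabilityMeasure ((μ univ)⁻¹ • μ) := inferInstance
      have hr : ((μ univ)⁻¹ • μ).Regular :=
        Measure.Regular.smul (ENNReal.inv_ne_top.2 (NeZero.ne _))
      refine (hM _ hpr hr).mono fun x hx U hU => ?_
      rw [Measure.smul_apply, smul_eq_mul]
      exact ENNReal.mul_pos (ENNReal.inv_ne_zero.2 (measure_ne_top _ _))
        ((Measure.mem_support_iff_forall x).1 hx U hU).ne'
  obtain ⟨E, hEc, hE⟩ := hsep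
  refine ⟨⋃ y ∈ E, {γ | e y γ ≠ 0}, hEc.biUnion fun y _ => hs y, fun C hC hDC f => ?_⟩
  rw [← hμ, ← hμ]
  have hae : μ.support ∈ ae μ := Measure.support_mem_ae_of_innerRegularWRT_isCompact_isOpen
    hreg.innerRegular
  refine integral_congr_ae ?_
  filter_upwards [hae] with x hx
  rw [ContinuousMap.comp_apply, hC.eq_self hi]
  intro γ hγ
  refine eq_zero_of_mem_closure he (fun y hy => ?_) (hE hx)
  by_contra hne
  exact hγ (hDC (mem_biUnion hy hne))

lemma exists_countable_functional (he : Continuous e) (hi : Function.Injective e)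
    (hs : ∀ x, {γ | e x γ ≠ 0}.Countable) (hM : HasPropertyM K) (φ : StrongDual ℝ C(K, ℝ))
    (hφ : ‖φ‖ ≤ 1) :
    ∃ D : Set Γ, D.Countable ∧ ∀ C, GoodSet e C → D ⊆ C → ∀ f : C(K, ℝ),
      φ (f.comp (coordRetraction e C)) = φ f := by
  rcases isEmpty_or_nonempty K with hK | hK
  · exact ⟨∅, countable_empty, fun C _ _ f =>
      congrArg φ (ContinuousMap.ext fun x => (hK.false x).elim)⟩
  obtain ⟨φ₁, φ₂, h1, h2, h⟩ := exists_positive_sub φ hφ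
  obtain ⟨D₁, hD₁, H₁⟩ := exists_countable_positive he hi hs hM φ₁ h1
  obtain ⟨D₂, hD₂, H₂⟩ := exists_countable_positive he hi hs hM φ₂ h2
  refine ⟨D₁ ∪ D₂, hD₁.union hD₂, fun C hC hDC f => ?_⟩
  rw [h, h, H₁ C hC (subset_union_left.trans hDC), H₂ C hC (subset_union_right.trans hDC)]

end FunctionalM

/-! ### Projectional skeletons in closed subspaces of `C(K)` -/

lemma exists_annihilator_infDist {E : Type*} [NormedAddCommGroup E] [NormedSpace ℝ E]
    (Y : Submodule ℝ E) (d : E) :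
    ∃ χ : StrongDual ℝ E, ‖χ‖ ≤ 1 ∧ (∀ y ∈ Y, χ y = 0) ∧ χ d = Metric.infDist d Y := by
  obtain ⟨ψ, hψ, hψd⟩ := exists_dual_vector'' ℝ (Y.mkQ d)
  have hle : ∀ x, ‖Y.mkQ x‖ ≤ ‖x‖ := fun x => Submodule.Quotient.norm_mk_le Y x
  refine ⟨(ψ.toLinearMap.comp Y.mkQ).mkContinuous 1 fun x => ?_,
    LinearMap.mkContinuous_norm_le _ zero_le_one _, fun y hy => ?_, ?_⟩
  · rw [one_mul]
    refine (ψ.le_of_opNorm_le hψ _).trans ?_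
    rw [one_mul]
    exact hle x
  · change ψ (Y.mkQ y) = 0
    rw [Submodule.mkQ_apply, (Submodule.Quotient.mk_eq_zero Y).2 hy, map_zero]
  · change ψ (Y.mkQ d) = _
    rw [hψd]
    exact QuotientAddGroup.norm_mk (S := Y.toAddSubgroup) d

section CorsonSkeleton
variable {K : Type u} [TopologicalSpace K] [CompactSpace K] [T2Space K]
  {Γ : Type v} {e : K → Γ → ℝ}

/-- Countable good coordinate sets whose induced projection of `C(K)` leaves the subspace `Y`
invariant; they index the projectional skeleton of `Y`. -/
structure AdmissibleSet (e : K → Γ → ℝ) (Y : Submodule ℝ C(K, ℝ)) (C : Set Γ) : Prop where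
  countable : C.Countable
  good : GoodSet e C
  mem : ∀ f ∈ Y, f.comp (coordRetraction e C) ∈ Y

lemma AdmissibleSet.iUnion (he : Continuous e) (hi : Function.Injective e)
    {Y : Submodule ℝ C(K, ℝ)} (hY : IsClosed (Y : Set C(K, ℝ))) {C : ℕ → Set Γ}
    (hC : Monotone C) (h : ∀ n, AdmissibleSet e Y (C n)) : AdmissibleSet e Y (⋃ n, C n) where
  countable := countable_iUnion fun n => (h n).countable
  good := GoodSet.iUnion he hi hC fun n => (h n).good
  mem f hf := hY.mem_of_tendsto (tendsto_comp_coordRetraction he hi hC (fun n => (h n).good) f)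
    (Eventually.of_forall fun n => (h n).mem f hf)

variable [MeasurableSpace K] [BorelSpace K]

/-- Closing off: along an increasing sequence of good sets one absorbs the coordinate sets of
functionals which annihilate `Y` and measure the distance to `Y` of a dense set of values of the
projections. If `v` is the image of some `y ∈ Y` and `d` is close to `v`, the functional `χ`
attached to `d` has `χ v = χ y = 0`, so `d`, and hence `v`, is close to `Y`. -/
lemma exists_admissibleSet (he : Continuous e) (hi : Function.Injective e)
    (hs : ∀ x, {γ | e x γ ≠ 0}.Countable) (hM : HasPropertyM K)
    {Y : Submodule ℝ C(K, ℝ)} (hY : IsClosed (Y : Set C(K, ℝ))) {C : Set Γ}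
    (hC : C.Countable) : ∃ D : Set Γ, C ⊆ D ∧ AdmissibleSet e Y D := by
  choose χ hχn hχY hχd using exists_annihilator_infDist Y
  choose A hAc hA using fun d => exists_countable_functional he hi hs hM (χ d) (hχn d)
  let S := {C : Set Γ // C.Countable ∧ GoodSet e C}
  choose Q hQc hQ using fun C : S => isSeparable_range_comp he hi C.2.1 C.2.2
  have hnext : ∀ C : S, ∃ D : S, C.1 ⊆ D.1 ∧ ∀ d ∈ Q C, A d ⊆ D.1 := fun C => by
    obtain ⟨D, hDc, hCD, hD⟩ := exists_goodSet he hi hs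
      (C := C.1 ∪ ⋃ d ∈ Q C, A d) (C.2.1.union ((hQc C).biUnion fun d _ => hAc d))
    exact ⟨⟨D, hDc, hD⟩, subset_union_left.trans hCD, fun d hd =>
      (subset_biUnion_of_mem (u := A) hd).trans (subset_union_right.trans hCD)⟩
  choose next hn1 hn2 using hnext
  obtain ⟨C₀, hC₀c, hCC₀, hC₀⟩ := exists_goodSet he hi hs hC
  let F : ℕ → S := fun n => next^[n] ⟨C₀, hC₀c, hC₀⟩
  have hF : ∀ n, F (n + 1) = next (F n) := fun n => by
    simp only [F, Function.iterate_succ_apply']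
  have hmono : Monotone fun n => (F n).1 := monotone_nat_of_le_succ fun n => by
    rw [hF]
    exact hn1 _
  have hgood : GoodSet e (⋃ n, (F n).1) := GoodSet.iUnion he hi hmono fun n => (F n).2.2
  refine ⟨⋃ n, (F n).1, hCC₀.trans (subset_iUnion (fun n => (F n).1) 0),
    countable_iUnion fun n => (F n).2.1, hgood, fun y hy => ?_⟩
  set v := y.comp (coordRetraction e (⋃ n, (F n).1)) with hv
  have hvQ : v ∈ closure (⋃ n, Q (F n)) := by
    refine isClosed_closure.mem_of_tendsto
      (tendsto_comp_coordRetraction he hi hmono (fun n => (F n).2.2) y)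
      (Eventually.of_forall fun n => ?_)
    exact closure_mono (subset_iUnion (fun n => Q (F n)) n) (hQ (F n) ⟨y, rfl⟩)
  have hne : (Y : Set C(K, ℝ)).Nonempty := ⟨0, Y.zero_mem⟩
  change v ∈ (Y : Set C(K, ℝ))
  rw [hY.mem_iff_infDist_zero hne]
  refine le_antisymm (le_of_forall_pos_le_add fun ε hε => ?_) Metric.infDist_nonneg
  obtain ⟨d, hd, hvd⟩ := Metric.mem_closure_iff.1 hvQ (ε / 2) (half_pos hε)
  obtain ⟨n, hdn⟩ := mem_iUnion.1 hd
  have hAd : A d ⊆ ⋃ n, (F n).1 := by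
    refine Subset.trans ?_ (subset_iUnion (fun n => (F n).1) (n + 1))
    simp only [hF]
    exact hn2 _ d hdn
  have hχv : χ d v = 0 := by rw [hv, hA d _ hgood hAd, hχY d y hy]
  have h1 : Metric.infDist d Y ≤ ε / 2 := by
    rw [← hχd d, ← sub_zero (χ d d), ← hχv, ← map_sub]
    refine (le_abs_self _).trans (((χ d).le_of_opNorm_le (hχn d) _).trans ?_)
    rw [one_mul, ← dist_eq_norm, dist_comm]
    exact hvd.le
  have h2 := Metric.infDist_le_infDist_add_dist (s := (Y : Set C(K, ℝ))) (x := v) (y := d)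
  linarith

end CorsonSkeleton

section CorsonSkeletonMain
variable {K : Type u} [TopologicalSpace K] [CompactSpace K] [T2Space K]

lemma norm_comp_le (f : C(K, ℝ)) (ρ : C(K, K)) : ‖f.comp ρ‖ ≤ ‖f‖ := by
  rw [ContinuousMap.norm_le _ (norm_nonneg _)]
  exact fun x => f.norm_coe_le_norm _

variable {Γ : Type v} {e : K → Γ → ℝ} {Y : Submodule ℝ C(K, ℝ)}

/-- The projection of `Y` induced by an admissible coordinate set. -/
noncomputable def AdmissibleSet.proj {C : Set Γ} (h : AdmissibleSet e Y C) : ↥Y →L[ℝ] ↥Y :=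
  LinearMap.mkContinuous
    { toFun := fun f => ⟨f.1.comp (coordRetraction e C), h.mem f.1 f.2⟩
      map_add' := fun _ _ => rfl
      map_smul' := fun _ _ => rfl } 1
    (fun f => by
      rw [one_mul]
      exact norm_comp_le f.1 _)

lemma AdmissibleSet.coe_proj {C : Set Γ} (h : AdmissibleSet e Y C) (f : ↥Y) :
    (h.proj f : C(K, ℝ)) = f.1.comp (coordRetraction e C) := rfl

lemma AdmissibleSet.proj_proj_of_subset (hi : Function.Injective e) {C D : Set Γ}
    (h : AdmissibleSet e Y C) (h' : AdmissibleSet e Y D) (hCD : C ⊆ D) (f : ↥Y) :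
    h.proj (h'.proj f) = h.proj f ∧ h'.proj (h.proj f) = h.proj f :=
  ⟨Subtype.ext (ContinuousMap.ext fun x =>
      congrArg f.1 (h.good.comp_right hi h'.good hCD x)),
    Subtype.ext (ContinuousMap.ext fun x =>
      congrArg f.1 (h.good.comp_left hi h'.good hCD x))⟩

lemma AdmissibleSet.tendsto_proj (he : Continuous e) (hi : Function.Injective e)
    {C : ℕ → Set Γ} (hC : Monotone C) (h : ∀ n, AdmissibleSet e Y (C n))
    (h' : AdmissibleSet e Y (⋃ n, C n)) (f : ↥Y) :
    Tendsto (fun n => (h n).proj f) atTop (𝓝 (h'.proj f)) := by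
  rw [tendsto_subtype_rng]
  exact tendsto_comp_coordRetraction he hi hC (fun n => (h n).good) f.1

end CorsonSkeletonMain

theorem has1ProjectionalSkeleton_of_corson {K : Type u} [TopologicalSpace K] [CompactSpace K]
    [T2Space K] [MeasurableSpace K] [BorelSpace K] (hK : IsCorsonCompact K)
    (hM : HasPropertyM K) (Y : Submodule ℝ C(K, ℝ)) (hY : IsClosed (Y : Set C(K, ℝ))) :
    Has1ProjectionalSkeleton ↥Y := by
  obtain ⟨Γ, A, -, hA, ⟨H⟩⟩ := hK
  let e : K → Γ → ℝ := fun x => (H x).1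
  have he : Continuous e := continuous_subtype_val.comp H.continuous
  have hi : Function.Injective e := Subtype.val_injective.comp H.injective
  have hs : ∀ x, {γ | e x γ ≠ 0}.Countable := fun x => hA _ (H x).2
  let I : Type u := {C : Set Γ // AdmissibleSet e Y C}
  have hcof : ∀ C : Set Γ, C.Countable → ∃ D : I, C ⊆ D.1 := fun C hC => by
    obtain ⟨D, hCD, hD⟩ := exists_admissibleSet he hi hs hM hY hC
    exact ⟨⟨D, hD⟩, hCD⟩
  have hne : Nonempty I := ⟨(hcof ∅ countable_empty).choose⟩
  refine ⟨{ Γ := I, directed := ?_, P := fun C => C.2.proj, idem := ?_, separable := ?_,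
            covers := ?_, comp_eq_of_le := ?_, sup_seq := ?_ }, fun C => ContinuousLinearMap.opNorm_le_bound _ zero_le_one fun f => ?_⟩
  · intro s t
    obtain ⟨w, hw⟩ := hcof (s.1 ∪ t.1) (s.2.countable.union t.2.countable)
    exact ⟨w, subset_union_left.trans hw, subset_union_right.trans hw⟩
  · exact fun s x => (s.2.proj_proj_of_subset hi s.2 Subset.rfl x).1
  · intro s
    refine (IsEmbedding.subtypeVal.isSeparable_preimage
      (isSeparable_range_comp he hi s.2.countable s.2.good)).mono ?_
    rintro _ ⟨f, rfl⟩
    exact ⟨f.1, rfl⟩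
  · intro f
    obtain ⟨D, hDc, hD⟩ := exists_countable_comp_eq he hi f.1
    obtain ⟨s, hs⟩ := hcof D hDc
    exact ⟨s, f, Subtype.ext (hD _ s.2.good hs)⟩
  · exact fun s t hst x => s.2.proj_proj_of_subset hi t.2 hst x
  · intro F hF
    have hmono : Monotone fun n => (F n).1 := fun m n hmn => hF.monotone hmn
    have hU : AdmissibleSet e Y (⋃ n, (F n).1) :=
      AdmissibleSet.iUnion he hi hY hmono fun n => (F n).2
    have hsub : ∀ n, (F n).1 ⊆ ⋃ n, (F n).1 := subset_iUnion fun n => (F n).1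
    refine ⟨⟨_, hU⟩, ⟨?_, ?_⟩, ?_⟩
    · rintro _ ⟨n, rfl⟩
      exact hsub n
    · intro w hw
      exact iUnion_subset fun n => hw ⟨n, rfl⟩
    · apply Subset.antisymm
      · rintro _ ⟨f, rfl⟩
        refine mem_closure_of_tendsto
          (AdmissibleSet.tendsto_proj he hi hmono (fun n => (F n).2) hU f)
          (Eventually.of_forall fun n => mem_iUnion.2 ⟨n, f, rfl⟩)
      · have hr : range hU.proj = {f | hU.proj f = f} := by
          ext f
          exact ⟨by
            rintro ⟨g, rfl⟩
            exact (hU.proj_proj_of_subset hi hU Subset.rfl g).1, fun h => ⟨f, h⟩⟩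
        change closure _ ⊆ range hU.proj
        rw [hr]
        refine closure_minimal ?_ (isClosed_eq hU.proj.continuous continuous_id)
        refine iUnion_subset fun n => ?_
        rintro _ ⟨f, rfl⟩
        exact ((F n).2.proj_proj_of_subset hi hU (hsub n) f).2
  · rw [one_mul]
    exact norm_comp_le f.1 _

/-- For a compact Hausdorff space `K` in the class `G₀`, the following are equivalent:
(i) `K` is Corson compact with property (M);
(ii) every closed linear subspace of `C(K)` has a 1-projectional skeleton;
(iii) for every closed linear subspace `Y` of `C(K)`, the dual unit ball `(B_{Y*}, w*)`
has a retractional skeleton. -/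
theorem corson_with_M_tfae (K : Type u) [TopologicalSpace K] [CompactSpace K] [T2Space K]
    [MeasurableSpace K] [BorelSpace K] (hK : InClassG0 K) :
    List.TFAE [
      IsCorsonCompact K ∧ HasPropertyM K,
      ∀ Y : Subspace ℝ C(K, ℝ), IsClosed (Y : Set C(K, ℝ)) → Has1ProjectionalSkeleton ↥Y,
      ∀ Y : Subspace ℝ C(K, ℝ), IsClosed (Y : Set C(K, ℝ)) →
        HasRetractionalSkeleton ↥(dualBall ↥Y)] := by
  tfae_have 1 → 2 := fun h Y hY => has1ProjectionalSkeleton_of_corson h.1 h.2 Y hY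
  tfae_have 2 → 3 := fun h Y hY => (h Y hY).hasRetractionalSkeleton
  tfae_have 3 → 1 := fun h => by
    have hG := dense_gdeltaPts hK h
    exact ⟨isCorsonCompact_of_hered h hG, hasPropertyM_of_hered h hG⟩
  tfae_finish
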